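/- arXiv:2510.12046 — 2 statements merged into one kernel-verified Lean document; each statement's English description precedes it below -/
import Mathlib

section
/- For every nonnegative integer n, the descent polynomial B_n(t) = Σ_{w ∈ K(B_n)} t^{des_B(w)} is γ-positive: B_n(t) = Σ_{k=0}^{⌊n/2⌋} γ_{n,k}^B t^k (1+t)^{n−2k}, where γ_{n,k}^B = #{ w ∈ K(B_n) : dd_B(w) = 0 and des_B(w) = k }. Moreover γ_{n,k}^B = γ_{n+1,k}^S, where γ_{n+1,k}^S = #{ w ∈ K(S_{n+1}) : dd_A(w) = 0 and des_A(w) = k }. -/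
/-!
The statement splits into a bijection, which carries type `B` to type `A`, and a generating
function computation in type `A`.

**From type `B` to type `A`.** For a separable signed permutation `w`, the word `0 :: w` avoids
`3142` and `2413`: avoiding `(-2)1` and `2(-1)` says that of two letters of opposite sign the later
one has the larger absolute value, and this rules out every mixed-sign occurrence (`SB.av`). So
`w ↦ st (0 :: w)` maps `K(B_n)` to `K(S_{n+1})`, and it keeps the pattern of ascents and descents
of `0 :: w`, hence turns `des_B`, `dd_B` into `des_A`, `dd_A`. It is bijective (`bijOn_st`): after
translating the first letter of a separable `π` to `0`, the rest is a word `v` of nonzero integers,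
and a signed permutation has to be recovered from the signs and the relative order in `v`. Two
letters of equal sign must be compared by absolute value, and two letters of opposite sign by
position; separability of `0 :: v` is what makes this relation transitive (`prec_trans`), and the
rank of each letter in the resulting linear order is its absolute value in the preimage (`Phi`).

**The γ-expansion in type `A`.** The descents of `π ∈ S_{n+1}` form a word `dw π` of `n` booleans.
Fix a `2 × 2` matrix `M` and weigh `π` by the product of the entries `M x y` over the consecutive
letters `x y` of the word `s · dw π · e`. Let `D(s, e)` be the generating function over separable
permutations, `z` marking length, and `Q`, `P` its parts coming from the `⊕`- and
`⊖`-indecomposable permutations. A separable permutation of length at least two is either a direct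
or a skew sum, and not both; splitting off the last indecomposable summand gives
`D(s, e) = Q(s, e) + z D(s, 0) Q(0, e)`, `D(s, e) = P(s, e) + z D(s, 1) P(1, e)` and
`D + M = P + Q`. Eliminating `P` and `Q` when `M 1 0 = 1`, the series `f = D(1, 0)` satisfies
`f = 1 + z (a + b) f + z² p (f² + f³)` with `a = M 1 1`, `b = M 0 0`, `p = M 0 1` (`Dser_cubic`).
This equation determines `f` and involves only `a + b` and `p`. The choice `(a, b, p) = (t, 1, t)`
counts descents, the choice `(0, 1 + t, t)` kills double descents and produces
`t ^ k (1 + t) ^ (n - 2 k)`; so the two series agree, which is the γ-expansion (`sum_KS_gamma`).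
-/

namespace SepPaperFormal

noncomputable section

open Polynomial

def st (a : List ℤ) : List ℤ :=
  a.map (fun x => ((a.filter (fun y => decide (y < x))).length : ℤ) + 1)

def sts (a : List ℤ) : List ℤ :=
  a.map (fun x => x.sign * (((a.filter (fun y => decide (|y| < |x|))).length : ℤ) + 1))

def IsSignedPerm (w : List ℤ) : Prop :=
  (w.map Int.natAbs).Perm (List.range' 1 w.length)

def ContainsB (w u : List ℤ) : Prop := ∃ s : List ℤ, s.Sublist w ∧ sts s = u

def ContainsA (w u : List ℤ) : Prop := ∃ s : List ℤ, s.Sublist w ∧ st s = u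

def IsSepB (w : List ℤ) : Prop :=
  IsSignedPerm w ∧
    ¬ ContainsB w [-2, 1] ∧ ¬ ContainsB w [2, -1] ∧
    ¬ ContainsB w [3, 1, 4, 2] ∧ ¬ ContainsB w [2, 4, 1, 3] ∧
    ¬ ContainsB w [-3, -1, -4, -2] ∧ ¬ ContainsB w [-2, -4, -1, -3]

def IsSepA (w : List ℤ) : Prop :=
  IsSignedPerm w ∧ (∀ x ∈ w, 0 < x) ∧
    ¬ ContainsA w [3, 1, 4, 2] ∧ ¬ ContainsA w [2, 4, 1, 3]

def oplus (u v : List ℤ) : List ℤ :=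
  u ++ v.map (fun x => x + x.sign * (u.length : ℤ))

def ominus (u v : List ℤ) : List ℤ :=
  u.map (fun x => x + x.sign * (v.length : ℤ)) ++ v

def AllSameSign (l : List ℤ) : Prop := (∀ x ∈ l, 0 < x) ∨ (∀ x ∈ l, x < 0)

def OppSign (a b : List ℤ) : Prop := ∀ x ∈ a, ∀ y ∈ b, x * y < 0

-- blocks for statement 3
def blockOf (w : List ℤ) (q : List ℕ) (i : ℕ) : List ℤ :=
  (w.drop q[i]!).take (q[i+1]! - q[i]!)

def cutSeq (w : List ℤ) (cuts : List ℕ) : List ℕ := 0 :: (cuts ++ [w.length])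

def GoodDecomp (w : List ℤ) (cuts : List ℕ) : Prop :=
  List.Chain' (· < ·) (cutSeq w cuts) ∧
  w = List.foldl oplus (blockOf w (cutSeq w cuts) 0)
        ((List.range cuts.length).map (fun i => sts (blockOf w (cutSeq w cuts) (i + 1)))) ∧
  IsSepB (blockOf w (cutSeq w cuts) 0) ∧
  (∀ i, 1 ≤ i → i ≤ cuts.length → IsSepB (sts (blockOf w (cutSeq w cuts) i))) ∧
  (∀ j, j ≤ cuts.length → AllSameSign (blockOf w (cutSeq w cuts) j)) ∧
  (∀ i, 1 ≤ i → i ≤ cuts.length →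
    OppSign (blockOf w (cutSeq w cuts) (i - 1)) (blockOf w (cutSeq w cuts) i))

-- statement 4
inductive InC : List ℤ → Prop
  | one : InC [1]
  | negone : InC [-1]
  | dsum (u v : List ℤ) : InC u → InC v → InC (oplus u v)
  | ssum (u v : List ℤ) : InC u → InC v → AllSameSign (u ++ v) → InC (ominus u v)

-- the map φₙ as a relation
inductive PhiRel : List ℤ → List ℤ → Prop
  | base : PhiRel [1] []
  | gasc (w u : List ℤ) (p : ℕ) (hp1 : 1 ≤ p) (hp2 : p < w.length)
      (h : ∀ i j, i < p → p ≤ j → j < w.length → w[i]! < w[j]!)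
      (ih : PhiRel (w.take p) u) :
      PhiRel w (oplus u (st (w.drop p)))
  | gdes (w u : List ℤ) (p : ℕ) (hp1 : 1 ≤ p) (hp2 : p < w.length)
      (h : ∀ i j, i < p → p ≤ j → j < w.length → w[j]! < w[i]!)
      (ih : PhiRel (st (w.take p)) u) :
      PhiRel w (oplus u ((w.drop p).map (fun x => x - ((w.length - p : ℕ) : ℤ) - 1)))

-- the map ψₙ as a relation
inductive PsiRel : List ℤ → List ℤ → Prop
  | base : PsiRel [] [1]
  | pos (w u : List ℤ) (p : ℕ) (hp : p < w.length)
      (hdec : w = oplus (w.take p) (sts (w.drop p)))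
      (hsign : AllSameSign (w.drop p))
      (hlast : 0 < w[w.length - 1]!)
      (ih : PsiRel (w.take p) u) :
      PsiRel w (oplus u (sts (w.drop p)))
  | neg (w u : List ℤ) (p : ℕ) (hp : p < w.length)
      (hdec : w = oplus (w.take p) (sts (w.drop p)))
      (hsign : AllSameSign (w.drop p))
      (hlast : w[w.length - 1]! < 0)
      (ih : PsiRel (w.take p) u) :
      PsiRel w (ominus u ((sts (w.drop p)).map (fun x => x + ((w.length - p : ℕ) : ℤ) + 1)))

-- descent statistics
def DesB (w : List ℤ) : Finset ℕ :=
  (Finset.range w.length).filter (fun i => (if i = 0 then (0 : ℤ) else w[i-1]!) > w[i]!)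

def DDesB (w : List ℤ) : Finset ℕ :=
  (Finset.range w.length).filter (fun i =>
    (i = 0 ∨ (if i - 1 = 0 then (0 : ℤ) else w[i-2]!) > (if i = 0 then (0 : ℤ) else w[i-1]!)) ∧
    (if i = 0 then (0 : ℤ) else w[i-1]!) > w[i]!)

def DesA (w : List ℤ) : Finset ℕ :=
  (Finset.range w.length).filter (fun i => 1 ≤ i ∧ w[i-1]! > w[i]!)

def DDesA (w : List ℤ) : Finset ℕ :=
  (Finset.range w.length).filter (fun i => 1 ≤ i ∧
    (i = 1 ∨ w[i-2]! > w[i-1]!) ∧ w[i-1]! > w[i]!)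

-- inversions, negatives, negative sum pairs (0-based index sets)
def InvF (w : List ℤ) : Finset (ℕ × ℕ) :=
  (Finset.range w.length ×ˢ Finset.range w.length).filter
    (fun p => p.1 < p.2 ∧ w[p.2]! < w[p.1]!)

def NegF (w : List ℤ) : Finset ℕ :=
  (Finset.range w.length).filter (fun i => w[i]! < 0)

def NspF (w : List ℤ) : Finset (ℕ × ℕ) :=
  (Finset.range w.length ×ˢ Finset.range w.length).filter
    (fun p => p.1 < p.2 ∧ w[p.1]! + w[p.2]! < 0)

/-- Left weak order on `S_n` (combinatorial characterization). -/
def leS (u v : List ℤ) : Prop := InvF u ⊆ InvF v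

/-- Left weak order on `B_n` (combinatorial characterization). -/
def leB (u v : List ℤ) : Prop := InvF u ⊆ InvF v ∧ NegF u ⊆ NegF v ∧ NspF u ⊆ NspF v

/-- Coxeter length in type `B`. -/
def lenB (w : List ℤ) : ℕ := (NegF w).card + (InvF w).card + (NspF w).card

/-- Coxeter length in type `A`. -/
def lenS (w : List ℤ) : ℕ := (InvF w).card

def IsPermW (w : List ℤ) : Prop := IsSignedPerm w ∧ ∀ x ∈ w, 0 < x

/-- Rank generating function of the principal lower ideal `Λ_w^B`. -/
def FLamB (w : List ℤ) : Polynomial ℚ :=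
  ∑ᶠ u ∈ {u : List ℤ | u.length = w.length ∧ IsSignedPerm u ∧ leB u w},
    (X : Polynomial ℚ) ^ lenB u

/-- Rank generating function of the principal upper ideal `V_w^B`. -/
def FVB (w : List ℤ) : Polynomial ℚ :=
  ∑ᶠ u ∈ {u : List ℤ | u.length = w.length ∧ IsSignedPerm u ∧ leB w u},
    (X : Polynomial ℚ) ^ lenB u

/-- Rank generating function of the principal lower ideal `Λ_w^S`. -/
def FLamS (w : List ℤ) : Polynomial ℚ :=
  ∑ᶠ u ∈ {u : List ℤ | u.length = w.length ∧ IsPermW u ∧ leS u w},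
    (X : Polynomial ℚ) ^ lenS u

/-- Rank generating function of the principal upper ideal `V_w^S`. -/
def FVS (w : List ℤ) : Polynomial ℚ :=
  ∑ᶠ u ∈ {u : List ℤ | u.length = w.length ∧ IsPermW u ∧ leS w u},
    (X : Polynomial ℚ) ^ lenS u

/-- `[i] = 1 + q + ⋯ + q^{i-1}`. -/
def qint (i : ℕ) : Polynomial ℚ := ∑ j ∈ Finset.range i, (X : Polynomial ℚ) ^ j

/-- `[m]! = [1][2]⋯[m]`. -/
def qfact (m : ℕ) : Polynomial ℚ := ∏ i ∈ Finset.range m, qint (i + 1)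

-- separating trees
inductive STree where
  | leaf : STree
  | node : Bool → STree → STree → STree

def numLeaves : STree → ℕ
  | .leaf => 1
  | .node _ l r => numLeaves l + numLeaves r

def Decomp (w : List ℤ) (p : ℕ) : Prop :=
  (w = oplus (w.take p) (sts (w.drop p)) ∧ IsSepB (w.take p) ∧ IsSepB (sts (w.drop p)) ∧
    AllSameSign (w.drop p)) ∨
  (w = ominus (sts (w.take p)) (w.drop p) ∧ IsSepB (sts (w.take p)) ∧ IsSepB (w.drop p) ∧
    AllSameSign (w.drop p))

/-- `IsSepTree w T`: `T` is the (shape of the) separating tree of the separable signed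
permutation `w`, where internal nodes labeled `true` are `⊕`-nodes and those labeled
`false` are `⊖`-nodes, and the separating index is chosen largest possible. -/
inductive IsSepTree : List ℤ → STree → Prop
  | leaf (x : ℤ) : IsSepTree [x] .leaf
  | nodeA (w : List ℤ) (p : ℕ) (l r : STree)
      (hp1 : 1 ≤ p) (hp2 : p < w.length)
      (hmax : ∀ q, p < q → q < w.length → ¬ Decomp w q)
      (hdec : w = oplus (w.take p) (sts (w.drop p)))
      (h1 : IsSepB (w.take p)) (h2 : IsSepB (sts (w.drop p)))
      (hsgn : AllSameSign (w.drop p))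
      (hl : IsSepTree (w.take p) l) (hr : IsSepTree (sts (w.drop p)) r) :
      IsSepTree w (.node (decide (w[p-1]! < w[p]!)) l r)
  | nodeB (w : List ℤ) (p : ℕ) (l r : STree)
      (hp1 : 1 ≤ p) (hp2 : p < w.length)
      (hmax : ∀ q, p < q → q < w.length → ¬ Decomp w q)
      (hdec : w = ominus (sts (w.take p)) (w.drop p))
      (h1 : IsSepB (sts (w.take p))) (h2 : IsSepB (w.drop p))
      (hsgn : AllSameSign (w.drop p))
      (hl : IsSepTree (sts (w.take p)) l) (hr : IsSepTree (w.drop p) r) :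
      IsSepTree w (.node (decide (w[p-1]! < w[p]!)) l r)

/-- Multiset of leaf-counts `N(V)` over internal `⊕`-nodes `V` whose parent is a
`⊖`-node (the root, whose parent label is `none`, is excluded): the set `S⁺(w)`. -/
def plusNodes : STree → Option Bool → Multiset ℕ
  | .leaf, _ => 0
  | .node b l r, parent =>
      (if b = true ∧ parent = some false then ({numLeaves (.node b l r)} : Multiset ℕ) else 0)
        + plusNodes l (some b) + plusNodes r (some b)

/-- Multiset of leaf-counts `N(V)` over internal `⊖`-nodes `V` whose parent is a
`⊕`-node (root excluded): the set `S⁻(w)`. -/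
def minusNodes : STree → Option Bool → Multiset ℕ
  | .leaf, _ => 0
  | .node b l r, parent =>
      (if b = false ∧ parent = some true then ({numLeaves (.node b l r)} : Multiset ℕ) else 0)
        + minusNodes l (some b) + minusNodes r (some b)

/-- `∏_{m ∈ s} [m]!`. -/
def qfactProd (s : Multiset ℕ) : Polynomial ℚ := (s.map qfact).prod

/-! ### Separable words are sums -/

/-- The word `l` contains neither `3142` nor `2413`. -/
def Av (l : List ℤ) : Prop :=
  ∀ a b c d : ℤ, [a, b, c, d].Sublist l → ¬(b < d ∧ d < a ∧ a < c) ∧ ¬(c < a ∧ a < d ∧ d < b)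

lemma Av.sublist {l l' : List ℤ} (h : Av l) (hl : l'.Sublist l) : Av l' :=
  fun a b c d hs => h a b c d (hs.trans hl)

lemma sublist_four_map {l : List ℤ} {r : ℤ → ℤ} {a b c d : ℤ}
    (h : [a, b, c, d].Sublist (l.map r)) :
    ∃ a' b' c' d', [a', b', c', d'].Sublist l ∧ a = r a' ∧ b = r b' ∧ c = r c' ∧ d = r d' := by
  obtain ⟨l', hl', he⟩ := List.sublist_map_iff.1 h
  match l', he with
  | [a', b', c', d'], he =>
    simp only [List.map_cons, List.map_nil, List.cons.injEq, and_true] at he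
    exact ⟨a', b', c', d', hl', he.1, he.2.1, he.2.2.1, he.2.2.2⟩

lemma mem_of_sublist_four {l : List ℤ} {a b c d : ℤ} (h : [a, b, c, d].Sublist l) :
    a ∈ l ∧ b ∈ l ∧ c ∈ l ∧ d ∈ l := by
  refine ⟨h.subset ?_, h.subset ?_, h.subset ?_, h.subset ?_⟩ <;> simp

lemma lt_iff_of_mono {l : List ℤ} {r : ℤ → ℤ}
    (hr : ∀ x ∈ l, ∀ y ∈ l, x < y → r x < r y) {x y : ℤ} (hx : x ∈ l) (hy : y ∈ l) :
    r x < r y ↔ x < y := by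
  refine ⟨fun h => ?_, hr x hx y hy⟩
  rcases lt_trichotomy x y with h1 | h1 | h1
  · exact h1
  · subst h1; omega
  · have := hr y hy x hx h1; omega

/-- Containment of `3142` and `2413` only depends on the relative order of the entries. -/
lemma av_map {l : List ℤ} {r : ℤ → ℤ} (hr : ∀ x ∈ l, ∀ y ∈ l, x < y → r x < r y) :
    Av (l.map r) ↔ Av l := by
  constructor
  · intro h a b c d hs
    obtain ⟨ha, hb, hc, hd⟩ := mem_of_sublist_four hs
    have := h (r a) (r b) (r c) (r d) (hs.map r)
    simpa only [lt_iff_of_mono hr, ha, hb, hc, hd] using this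
  · intro h a b c d hs
    obtain ⟨a, b, c, d, hs', rfl, rfl, rfl, rfl⟩ := sublist_four_map hs
    obtain ⟨ha, hb, hc, hd⟩ := mem_of_sublist_four hs'
    simpa only [lt_iff_of_mono hr, ha, hb, hc, hd] using h a b c d hs'

lemma Av.anti {l : List ℤ} {r : ℤ → ℤ} (hr : ∀ x y, x < y ↔ r y < r x) (h : Av l) :
    Av (l.map r) := by
  intro a b c d hs
  obtain ⟨a, b, c, d, hs', rfl, rfl, rfl, rfl⟩ := sublist_four_map hs
  have := h a b c d hs'
  simp only [← hr]
  tauto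

/-- The word `l` is a concatenation of two nonempty words, all letters of the first being
smaller than all letters of the second; for a permutation, `l` is `⊕`-decomposable. -/
def Dec (l : List ℤ) : Prop :=
  ∃ A B : List ℤ, A ≠ [] ∧ B ≠ [] ∧ l = A ++ B ∧ ∀ a ∈ A, ∀ b ∈ B, a < b

/-- The analogue of `Dec` with all letters of the first part larger: `⊖`-decomposability. -/
def CoDec (l : List ℤ) : Prop :=
  ∃ A B : List ℤ, A ≠ [] ∧ B ≠ [] ∧ l = A ++ B ∧ ∀ a ∈ A, ∀ b ∈ B, b < a

lemma dec_map {l : List ℤ} {r : ℤ → ℤ} (hr : ∀ x ∈ l, ∀ y ∈ l, x < y → r x < r y) :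
    Dec (l.map r) ↔ Dec l := by
  constructor
  · rintro ⟨A, B, hA, hB, he, h⟩
    obtain ⟨A, B, rfl, rfl, rfl⟩ := List.map_eq_append_iff.1 he
    refine ⟨A, B, by simpa using hA, by simpa using hB, rfl, fun a ha b hb => ?_⟩
    exact (lt_iff_of_mono hr (by simp [ha]) (by simp [hb])).1
      (h _ (List.mem_map_of_mem ha) _ (List.mem_map_of_mem hb))
  · rintro ⟨A, B, hA, hB, rfl, h⟩
    refine ⟨A.map r, B.map r, by simpa using hA, by simpa using hB, by simp, ?_⟩
    simp only [List.mem_map, forall_exists_index, and_imp, forall_apply_eq_imp_iff₂]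
    exact fun a ha b hb => hr a (by simp [ha]) b (by simp [hb]) (h a ha b hb)

lemma codec_anti {l : List ℤ} {r : ℤ → ℤ} (hr : ∀ x y, x < y ↔ r y < r x) :
    CoDec (l.map r) ↔ Dec l := by
  constructor
  · rintro ⟨A, B, hA, hB, he, h⟩
    obtain ⟨A, B, rfl, rfl, rfl⟩ := List.map_eq_append_iff.1 he
    refine ⟨A, B, by simpa using hA, by simpa using hB, rfl, fun a ha b hb => ?_⟩
    exact (hr _ _).2 (h _ (List.mem_map_of_mem ha) _ (List.mem_map_of_mem hb))
  · rintro ⟨A, B, hA, hB, rfl, h⟩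
    refine ⟨A.map r, B.map r, by simpa using hA, by simpa using hB, by simp, ?_⟩
    simp only [List.mem_map, forall_exists_index, and_imp, forall_apply_eq_imp_iff₂]
    exact fun a ha b hb => (hr _ _).1 (h a ha b hb)

/-- Prepending a letter `x` to a word `A B` with `A < B`: if `x` exceeds all of `B`, the result
is codecomposable; otherwise, avoidance of `3142` shows that the letters of `B` smaller than `x`
form an initial segment of `B`, which can be moved to the left part. -/
lemma dec_cons {x : ℤ} {w : List ℤ} (hav : Av (x :: w)) (hnd : (x :: w).Nodup) (h : Dec w) :
    Dec (x :: w) ∨ CoDec (x :: w) := by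
  obtain ⟨A, B, hA, hB, rfl, hAB⟩ := h
  obtain ⟨a, A', rfl⟩ := List.exists_cons_of_ne_nil hA
  have hsplit := List.takeWhile_append_dropWhile (p := fun b => decide (b < x)) (l := B)
  set B₁ := B.takeWhile (fun b => decide (b < x)) with hB₁
  have hB₁x : ∀ b ∈ B₁, b < x := fun b hb => by simpa using List.mem_takeWhile_imp hb
  rcases hB₂ : B.dropWhile (fun b => decide (b < x)) with _ | ⟨y, B₂⟩
  · right
    rw [hB₂, List.append_nil] at hsplit
    rw [hsplit] at hB₁x
    obtain ⟨b, hb⟩ := List.exists_mem_of_ne_nil B hB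
    refine ⟨[x], a :: A' ++ B, by simp, by simp, rfl, ?_⟩
    intro x' hx' c hc
    obtain rfl : x' = x := by simpa using hx'
    rcases List.mem_append.1 hc with hc | hc
    · exact (hAB c hc b hb).trans (hB₁x b hb)
    · exact hB₁x c hc
  · left
    rw [hB₂] at hsplit
    have hyx : ¬ y < x := by
      have := List.head_dropWhile_not (fun b => decide (b < x)) (l := B) (by simp [hB₂])
      simpa [hB₂] using this
    have hyB : y ∈ B := by rw [← hsplit]; simp
    have hne : ∀ b ∈ B, b ≠ x := by
      rintro b hb rfl
      simp [hb] at hnd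
    have hyx' : x < y := lt_of_le_of_ne (not_lt.1 hyx) (hne y hyB).symm
    have hB₂x : ∀ b ∈ y :: B₂, x < b := by
      intro b hb
      rcases List.mem_cons.1 hb with rfl | hb
      · exact hyx'
      have hbB : b ∈ B := by rw [← hsplit]; simp [hb]
      by_contra hbx
      have hbx' : b < x := lt_of_le_of_ne (not_lt.1 hbx) (hne b hbB)
      have hs : [x, a, y, b].Sublist (x :: (a :: A' ++ B)) := by
        have h1 : [y, b].Sublist B := by
          rw [← hsplit]
          refine List.Sublist.trans ?_ (List.sublist_append_right _ _)
          exact (List.singleton_sublist.2 hb).cons_cons y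
        exact ((h1.trans (List.sublist_append_right A' B)).cons_cons a).cons_cons x
      exact (hav x a y b hs).1 ⟨hAB a (by simp) b hbB, hbx', hyx'⟩
    refine ⟨x :: (a :: A' ++ B₁), y :: B₂, by simp, by simp, by simp [← hsplit], ?_⟩
    intro c hc b hb
    have hbx := hB₂x b hb
    have hbB : b ∈ B := by rw [← hsplit]; simp only [List.mem_append]; exact Or.inr hb
    rcases List.mem_cons.1 hc with rfl | hc
    · exact hbx
    rcases List.mem_append.1 hc with hc | hc
    · exact hAB c hc b hbB
    · exact (hB₁x c hc).trans hbx

lemma neg_anti (x y : ℤ) : x < y ↔ -y < -x := by omega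

lemma map_neg_neg (l : List ℤ) : (l.map (fun x => -x)).map (fun x => -x) = l := by
  simp

lemma codec_iff (l : List ℤ) : CoDec l ↔ Dec (l.map (fun x => -x)) := by
  rw [← codec_anti neg_anti, map_neg_neg]

/-- A separable word with at least two letters is a direct or a skew sum. -/
lemma dec_or_codec : ∀ {w : List ℤ}, Av w → w.Nodup → 2 ≤ w.length → Dec w ∨ CoDec w
  | [], _, _, h => by simp at h
  | [x], _, _, h => by simp at h
  | [x, y], _, hnd, _ => by
    have hxy : x ≠ y := by simpa using hnd
    rcases lt_or_gt_of_ne hxy with h | h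
    · exact Or.inl ⟨[x], [y], by simp, by simp, rfl, by simpa⟩
    · exact Or.inr ⟨[x], [y], by simp, by simp, rfl, by simpa⟩
  | x :: y :: z :: l, hav, hnd, _ => by
    have hw : Av (y :: z :: l) := hav.sublist (List.sublist_cons_self _ _)
    rcases dec_or_codec hw hnd.of_cons (by simp) with h | h
    · exact dec_cons hav hnd h
    · have h1 := dec_cons (x := -x) (w := (y :: z :: l).map (fun x => -x))
        (by simpa using hav.anti neg_anti)
        (by simpa using hnd.map neg_injective) ((codec_iff _).1 h)
      rw [← List.map_cons (f := fun x : ℤ => -x), ← codec_iff, codec_anti neg_anti] at h1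
      exact h1.symm

lemma not_dec_and_codec {w : List ℤ} (h : Dec w) (h' : CoDec w) : False := by
  obtain ⟨A, B, hA, hB, rfl, h⟩ := h
  obtain ⟨A', B', hA', hB', he, h'⟩ := h'
  obtain ⟨a, A, rfl⟩ := List.exists_cons_of_ne_nil hA
  obtain ⟨a', A', rfl⟩ := List.exists_cons_of_ne_nil hA'
  have h1 : a = a' := by simpa using congrArg List.head? he
  have h2 : B.getLast hB = B'.getLast hB' := by
    have : (a :: A ++ B).getLast (by simp) = (a' :: A' ++ B').getLast (by simp) := by
      simp only [he]
    simpa [List.getLast_append_of_ne_nil, hB, hB'] using this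
  have h3 := h a (by simp) _ (List.getLast_mem hB)
  have h4 := h' a' (by simp) _ (List.getLast_mem hB')
  rw [← h1, ← h2] at h4
  omega

lemma Av.append {u v : List ℤ} (hu : Av u) (hv : Av v) (h : ∀ a ∈ u, ∀ b ∈ v, a < b) :
    Av (u ++ v) := by
  intro a b c d hs
  obtain ⟨s, t, he, hs, ht⟩ := List.sublist_append_iff.1 hs
  match s, he with
  | [], he =>
    simp only [List.nil_append] at he
    exact hv a b c d (he ▸ ht)
  | [x], he =>
    simp only [List.cons_append, List.nil_append, List.cons.injEq] at he
    obtain ⟨rfl, rfl⟩ := he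
    have h1 := h a (hs.subset (by simp)) b (ht.subset (by simp))
    have h2 := h a (hs.subset (by simp)) c (ht.subset (by simp))
    omega
  | [x, y], he =>
    simp only [List.cons_append, List.nil_append, List.cons.injEq] at he
    obtain ⟨rfl, rfl, rfl⟩ := he
    have h1 := h a (hs.subset (by simp)) d (ht.subset (by simp))
    have h2 := h b (hs.subset (by simp)) c (ht.subset (by simp))
    omega
  | [x, y, z], he =>
    simp only [List.cons_append, List.nil_append, List.cons.injEq] at he
    obtain ⟨rfl, rfl, rfl, rfl⟩ := he
    have h1 := h a (hs.subset (by simp)) d (ht.subset (by simp))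
    have h2 := h b (hs.subset (by simp)) d (ht.subset (by simp))
    have h3 := h c (hs.subset (by simp)) d (ht.subset (by simp))
    omega
  | x :: y :: z :: q :: s, he =>
    simp only [List.cons_append, List.cons.injEq] at he
    obtain ⟨rfl, rfl, rfl, rfl, he⟩ := he
    obtain ⟨rfl, rfl⟩ := List.append_eq_nil_iff.1 he.symm
    exact hu _ _ _ _ hs

/-! ### Unique decomposition of separable permutations -/

/-- `w` is a permutation of `1, …, w.length`. -/
def IsP (w : List ℤ) : Prop := w.Nodup ∧ ∀ x ∈ w, 1 ≤ x ∧ x ≤ w.length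

open Classical in
/-- The separable permutations of length `m`. -/
def KS (m : ℕ) : Finset (List ℤ) :=
  (((List.range' 1 m).map (fun k : ℕ => (k : ℤ))).permutations.toFinset).filter Av

lemma isP_iff_perm {w : List ℤ} {m : ℕ} :
    w.Perm ((List.range' 1 m).map (fun k : ℕ => (k : ℤ))) ↔ w.length = m ∧ IsP w := by
  have hnd : ((List.range' 1 m).map (fun k : ℕ => (k : ℤ))).Nodup :=
    (List.nodup_range' (step := 1)).map Nat.cast_injective
  constructor
  · intro h
    have hl : w.length = m := by simpa using h.length_eq
    refine ⟨hl, h.nodup_iff.2 hnd, fun x hx => ?_⟩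
    have := h.mem_iff.1 hx
    simp only [List.mem_map, List.mem_range'_1] at this
    obtain ⟨k, hk, rfl⟩ := this
    omega
  · rintro ⟨rfl, h1, h2⟩
    refine (List.Nodup.subperm h1 fun x hx => ?_).perm_of_length_le (by simp)
    have := h2 x hx
    simp only [List.mem_map, List.mem_range'_1]
    exact ⟨x.toNat, by omega, by omega⟩

lemma mem_KS {w : List ℤ} {m : ℕ} : w ∈ KS m ↔ w.length = m ∧ IsP w ∧ Av w := by
  simp [KS, List.mem_permutations, isP_iff_perm, and_assoc]

lemma nodup_length_le {l : List ℤ} (h : l.Nodup) {a b : ℤ} (hl : ∀ x ∈ l, a < x ∧ x ≤ b) :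
    l.length ≤ (b - a).toNat := by
  rw [← List.toFinset_card_of_nodup h, ← Int.card_Ioc]
  exact Finset.card_le_card fun x hx => by simpa using hl x (by simpa using hx)

/-- The direct sum of two words of positive integers. -/
def cc (u v : List ℤ) : List ℤ := u ++ v.map (fun x => x + (u.length : ℤ))

lemma IsP.cc {u v : List ℤ} (hu : IsP u) (hv : IsP v) : IsP (cc u v) := by
  refine ⟨List.Nodup.append hu.1 (hv.1.map (add_left_injective _)) ?_, ?_⟩
  · intro x hx hx'
    simp only [List.mem_map] at hx'
    obtain ⟨y, hy, rfl⟩ := hx'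
    have := hu.2 _ hx
    have := hv.2 _ hy
    omega
  · intro x hx
    simp only [SepPaperFormal.cc, List.mem_append, List.mem_map, List.length_append,
      List.length_map] at hx ⊢
    rcases hx with hx | ⟨y, hy, rfl⟩
    · have := hu.2 _ hx
      omega
    · have := hv.2 _ hy
      omega

lemma cc_lt {u v : List ℤ} (hu : IsP u) (hv : IsP v) :
    ∀ a ∈ u, ∀ b ∈ v.map (fun x => x + (u.length : ℤ)), a < b := by
  simp only [List.mem_map, forall_exists_index, and_imp, forall_apply_eq_imp_iff₂]
  intro a ha b hb
  have := hu.2 _ ha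
  have := hv.2 _ hb
  omega

/-- A permutation cut into a low prefix and a high suffix is a direct sum of permutations. -/
lemma IsP.split {A B : List ℤ} (h : IsP (A ++ B)) (hAB : ∀ a ∈ A, ∀ b ∈ B, a < b) :
    IsP A ∧ IsP (B.map (fun x => x - (A.length : ℤ))) := by
  obtain ⟨hnd, hr⟩ := h
  have hndA : A.Nodup := (List.nodup_append.1 hnd).1
  have hndB : B.Nodup := (List.nodup_append.1 hnd).2.1
  simp only [List.length_append, List.mem_append] at hr
  refine ⟨⟨hndA, fun x hx => ?_⟩, hndB.map (sub_left_injective), ?_⟩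
  · have h1 := nodup_length_le hndB (a := x) (b := (A.length + B.length : ℕ))
      fun b hb => ⟨hAB x hx b hb, (hr b (Or.inr hb)).2⟩
    have := hr x (Or.inl hx)
    omega
  · simp only [List.mem_map, forall_exists_index, and_imp, forall_apply_eq_imp_iff₂,
      List.length_map]
    intro y hy
    have h1 := nodup_length_le hndA (a := 0) (b := y - 1)
      fun a ha => ⟨by have := hr a (Or.inl ha); omega, by have := hAB a ha y hy; omega⟩
    have := hr y (Or.inr hy)
    omega

/-- Cutting as far to the right as possible makes the right part indecomposable. -/
lemma Dec.last_cut {w : List ℤ} (h : Dec w) :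
    ∃ A B : List ℤ, A ≠ [] ∧ B ≠ [] ∧ w = A ++ B ∧ (∀ a ∈ A, ∀ b ∈ B, a < b) ∧ ¬ Dec B := by
  obtain ⟨A, B, hA, hB, rfl, hAB⟩ := h
  induction hn : B.length using Nat.strong_induction_on generalizing A B with
  | _ n ih =>
    by_cases hd : Dec B
    · obtain ⟨C, D, hC, hD, rfl, hCD⟩ := hd
      have hlen : D.length < n := by
        have := List.length_pos_iff.2 hC
        simp only [List.length_append] at hn
        omega
      obtain ⟨A', B', h1, h2, h3, h4⟩ := ih D.length hlen (A ++ C) D (by simp [hA]) hD (by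
        intro a ha b hb
        rcases List.mem_append.1 ha with ha | ha
        · exact hAB a ha b (by simp [hb])
        · exact hCD a ha b hb) rfl
      exact ⟨A', B', h1, h2, by rw [← h3, List.append_assoc], h4⟩
    · exact ⟨A, B, hA, hB, rfl, hAB, hd⟩

lemma dec_shift (v : List ℤ) (c : ℤ) : Dec (v.map (fun x => x + c)) ↔ Dec v :=
  dec_map fun x _ y _ h => by omega

lemma av_shift (v : List ℤ) (c : ℤ) : Av (v.map (fun x => x + c)) ↔ Av v :=
  av_map fun x _ y _ h => by omega

/-- Among all expressions of a word as a direct sum, one with `⊕`-indecomposable right summand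
has the longest left summand. -/
lemma cc_length_le {u v u' v' : List ℤ} (hu' : IsP u') (hv' : IsP v')
    (hd : ¬ Dec v) (hne' : v' ≠ []) (h : cc u v = cc u' v') : u'.length ≤ u.length := by
  by_contra hlt
  push Not at hlt
  unfold cc at h
  rcases List.append_eq_append_iff.1 h with ⟨C, h1, h2⟩ | ⟨C, h1, h2⟩
  · apply hd
    rw [← dec_shift v u.length, h2]
    refine ⟨C, _, ?_, by simpa using hne', rfl, fun a ha b hb => ?_⟩
    · rintro rfl
      simp [h1] at hlt
    · exact cc_lt hu' hv' a (by simp [h1, ha]) b hb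
  · have := congrArg List.length h1
    simp at this
    omega

lemma cc_injective {u v u' v' : List ℤ} (hu : IsP u) (hv : IsP v) (hu' : IsP u') (hv' : IsP v')
    (hd : ¬ Dec v) (hd' : ¬ Dec v') (hne : v ≠ []) (hne' : v' ≠ [])
    (h : cc u v = cc u' v') : u = u' ∧ v = v' := by
  have h1 := cc_length_le hu' hv' hd hne' h
  have h2 := cc_length_le hu hv hd' hne h.symm
  have h3 : u.length = u'.length := by omega
  obtain ⟨rfl, h5⟩ := List.append_inj h h3
  exact ⟨rfl, (List.map_injective_iff.2 (add_left_injective _)) h5⟩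

open Classical in
/-- Unique decomposition of the decomposable separable permutations. -/
lemma sum_dec {R : Type*} [AddCommMonoid R] (n : ℕ) (F : List ℤ → R) :
    ∑ w ∈ (KS (n + 2)).filter Dec, F w =
      ∑ p ∈ Finset.HasAntidiagonal.antidiagonal n, ∑ u ∈ KS (p.1 + 1),
        ∑ v ∈ (KS (p.2 + 1)).filter (fun v => ¬ Dec v), F (cc u v) := by
  simp_rw [← Finset.sum_product']
  rw [Finset.sum_sigma']
  symm
  have key : ∀ x ∈ (Finset.HasAntidiagonal.antidiagonal n).sigma
      (fun p => KS (p.1 + 1) ×ˢ (KS (p.2 + 1)).filter (fun v => ¬ Dec v)),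
      x.1.1 + x.1.2 = n ∧ (x.2.1.length = x.1.1 + 1 ∧ IsP x.2.1 ∧ Av x.2.1) ∧
        (x.2.2.length = x.1.2 + 1 ∧ IsP x.2.2 ∧ Av x.2.2) ∧ ¬ Dec x.2.2 := by
    intro x hx
    simpa [mem_KS] using hx
  refine Finset.sum_bij (fun x _ => cc x.2.1 x.2.2) ?_ ?_ ?_ ?_
  · intro x hx
    obtain ⟨h1, ⟨h2, h3, h4⟩, ⟨h5, h6, h7⟩, h8⟩ := key x hx
    rw [Finset.mem_filter, mem_KS]
    refine ⟨⟨?_, h3.cc h6, h4.append ((av_shift _ _).2 h7) (cc_lt h3 h6)⟩, _, _, ?_, ?_, rfl,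
      cc_lt h3 h6⟩
    · simp only [cc, List.length_append, List.length_map]; omega
    · rw [← List.length_pos_iff]; omega
    · rw [← List.length_pos_iff, List.length_map]; omega
  · intro x hx y hy hxy
    obtain ⟨h1, ⟨h2, h3, h4⟩, ⟨h5, h6, h7⟩, h8⟩ := key x hx
    obtain ⟨g1, ⟨g2, g3, g4⟩, ⟨g5, g6, g7⟩, g8⟩ := key y hy
    obtain ⟨e1, e2⟩ := cc_injective h3 h6 g3 g6 h8 g8
      (by rw [← List.length_pos_iff]; omega) (by rw [← List.length_pos_iff]; omega) hxy
    obtain ⟨⟨i, j⟩, u, v⟩ := x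
    obtain ⟨⟨i', j'⟩, u', v'⟩ := y
    simp only at *
    subst e1 e2
    obtain rfl : i = i' := by omega
    obtain rfl : j = j' := by omega
    rfl
  · intro w hw
    rw [Finset.mem_filter, mem_KS] at hw
    obtain ⟨⟨hlen, hP, hAv⟩, hD⟩ := hw
    obtain ⟨A, B, hA, hB, rfl, hAB, hnd⟩ := hD.last_cut
    obtain ⟨hPA, hPB⟩ := hP.split hAB
    rw [← List.length_pos_iff] at hA hB
    rw [List.length_append] at hlen
    have hBB : (B.map (fun x => x - (A.length : ℤ))).map (fun x => x + (A.length : ℤ)) = B := by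
      simp [Function.comp_def]
    refine ⟨⟨(A.length - 1, B.length - 1), (A, B.map (fun x => x - (A.length : ℤ)))⟩, ?_, ?_⟩
    · simp only [Finset.mem_sigma, Finset.HasAntidiagonal.mem_antidiagonal, Finset.mem_product, mem_KS,
        Finset.mem_filter, List.length_map]
      refine ⟨by omega, ⟨by omega, hPA, hAv.sublist (List.sublist_append_left _ _)⟩,
        ⟨by omega, hPB, ?_⟩, ?_⟩
      · rw [← av_shift _ A.length, hBB]
        exact hAv.sublist (List.sublist_append_right _ _)
      · rw [← dec_shift _ A.length, hBB]
        exact hnd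
    · simp only [cc, hBB]
  · intro x hx
    rfl

/-! ### Transfer-matrix generating functions -/

/-- The descent word: one letter for each pair of neighbours, `true` marking a descent. -/
def dw : List ℤ → List Bool
  | x :: y :: l => decide (y < x) :: dw (y :: l)
  | _ => []

lemma dw_map {r : ℤ → ℤ} : ∀ {l : List ℤ},
    (∀ x ∈ l, ∀ y ∈ l, x < y → r x < r y) → dw (l.map r) = dw l
  | [], _ => rfl
  | [_], _ => rfl
  | x :: y :: l, hr => by
    have ih := dw_map (r := r) (l := y :: l) fun a ha b hb =>
      hr a (List.mem_cons_of_mem _ ha) b (List.mem_cons_of_mem _ hb)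
    simp only [List.map_cons, dw] at ih ⊢
    rw [ih]
    congr 1
    simpa using lt_iff_of_mono hr (x := y) (y := x) (by simp) (by simp)

lemma dw_anti {r : ℤ → ℤ} (hr : ∀ x y, x < y ↔ r y < r x) : ∀ {l : List ℤ},
    l.Nodup → dw (l.map r) = (dw l).map not
  | [], _ => rfl
  | [_], _ => rfl
  | x :: y :: l, hnd => by
    have ih := dw_anti hr hnd.of_cons
    simp only [List.map_cons, dw] at ih ⊢
    rw [ih]
    congr 1
    have hne : x ≠ y := by
      rintro rfl
      simp at hnd
    rw [← decide_not, decide_eq_decide, ← hr]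
    omega

lemma dw_append : ∀ {A B : List ℤ}, A ≠ [] → B ≠ [] → (∀ a ∈ A, ∀ b ∈ B, a < b) →
    dw (A ++ B) = dw A ++ false :: dw B
  | [], _, h, _, _ => absurd rfl h
  | [a], [], _, h, _ => absurd rfl h
  | [a], b :: B, _, _, h => by
    have := h a (by simp) b (by simp)
    simp [dw, this.le]
  | a :: a' :: A, B, _, hB, h => by
    have ih := dw_append (A := a' :: A) (by simp) hB
      fun x hx b hb => h x (List.mem_cons_of_mem _ hx) b hb
    simp only [List.cons_append, dw] at ih ⊢
    rw [ih]

lemma length_dw : ∀ l : List ℤ, (dw l).length = l.length - 1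
  | [] => rfl
  | [_] => rfl
  | x :: y :: l => by simpa [dw] using length_dw (y :: l)

section Weights

variable {R : Type*} [CommRing R]

/-- The product of `M x y` over the pairs `x y` of consecutive letters of the word `s · l · e`. -/
def wtl (M : Bool → Bool → R) : Bool → List Bool → Bool → R
  | s, [], e => M s e
  | s, x :: l, e => M s x * wtl M x l e

lemma wtl_append (M : Bool → Bool → R) (x : Bool) (l' : List Bool) (e : Bool) :
    ∀ (s : Bool) (l : List Bool), wtl M s (l ++ x :: l') e = wtl M s l x * wtl M x l' e
  | _, [] => rfl
  | s, y :: l => by simp [wtl, wtl_append M x l' e y l, mul_assoc]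

/-- The matrix `M` with the two states exchanged. -/
def flipM (M : Bool → Bool → R) : Bool → Bool → R := fun x y => M (!x) (!y)

lemma wtl_flipM (M : Bool → Bool → R) (e : Bool) : ∀ (s : Bool) (l : List Bool),
    wtl (flipM M) (!s) (l.map not) (!e) = wtl M s l e
  | s, [] => by simp [wtl, flipM]
  | s, y :: l => by simp [wtl, flipM, ← wtl_flipM M e y l]

/-- Weighted generating function of the separable permutations; `n` is the number of
neighbouring pairs, so the coefficient of `X ^ n` concerns length `n + 1`. -/
def Dser (M : Bool → Bool → R) (s e : Bool) : PowerSeries R :=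
  PowerSeries.mk fun n => ∑ w ∈ KS (n + 1), wtl M s (dw w) e

open Classical in
/-- The part of `Dser` coming from `⊕`-indecomposable permutations. -/
def Qser (M : Bool → Bool → R) (s e : Bool) : PowerSeries R :=
  PowerSeries.mk fun n => ∑ w ∈ (KS (n + 1)).filter (fun w => ¬ Dec w), wtl M s (dw w) e

open Classical in
/-- The part of `Dser` coming from `⊖`-indecomposable permutations. -/
def Pser (M : Bool → Bool → R) (s e : Bool) : PowerSeries R :=
  PowerSeries.mk fun n => ∑ w ∈ (KS (n + 1)).filter (fun w => ¬ CoDec w), wtl M s (dw w) e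

lemma not_dec_of_length_one {w : List ℤ} (h : w.length = 1) : ¬ Dec w ∧ ¬ CoDec w := by
  constructor <;>
  · rintro ⟨A, B, hA, hB, rfl, -⟩
    rw [← List.length_pos_iff] at hA hB
    rw [List.length_append] at h
    omega

/-- Splitting off the last indecomposable summand of a direct sum; the neighbours across the cut
form an ascent. -/
lemma Dser_eq_Q (M : Bool → Bool → R) (s e : Bool) :
    Dser M s e = Qser M s e + PowerSeries.X * (Dser M s false * Qser M false e) := by
  classical
  ext n
  rcases n with _ | n
  · rw [map_add, PowerSeries.coeff_zero_X_mul, add_zero, Dser, Qser, PowerSeries.coeff_mk,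
      PowerSeries.coeff_mk, Finset.filter_true_of_mem]
    intro w hw
    exact (not_dec_of_length_one (mem_KS.1 hw).1).1
  · rw [map_add, PowerSeries.coeff_succ_X_mul, PowerSeries.coeff_mul]
    simp only [Dser, Qser, PowerSeries.coeff_mk]
    rw [← Finset.sum_filter_not_add_sum_filter (KS (n + 1 + 1)) Dec, sum_dec]
    congr 1
    refine Finset.sum_congr rfl fun p _ => ?_
    rw [Finset.sum_mul_sum]
    refine Finset.sum_congr rfl fun u hu => Finset.sum_congr rfl fun v hv => ?_
    obtain ⟨hul, huP, -⟩ := mem_KS.1 hu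
    obtain ⟨hvl, hvP, -⟩ := mem_KS.1 (Finset.mem_filter.1 hv).1
    rw [← wtl_append, cc, dw_append (by rw [← List.length_pos_iff]; omega)
      (by rw [← List.length_pos_iff, List.length_map]; omega) (cc_lt huP hvP),
      dw_map fun x _ y _ h => by omega]

/-- Complementation `x ↦ m + 1 - x` exchanges ascents and descents. -/
lemma sum_compl {S : Type*} [AddCommMonoid S] (m : ℕ) (F : List ℤ → S) :
    ∑ w ∈ KS m, F w = ∑ w ∈ KS m, F (w.map (fun x => (m : ℤ) + 1 - x)) := by
  have hmem : ∀ w ∈ KS m, w.map (fun x => (m : ℤ) + 1 - x) ∈ KS m := by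
    intro w hw
    rw [mem_KS] at hw ⊢
    obtain ⟨h1, ⟨h2, h3⟩, h4⟩ := hw
    refine ⟨by simpa, ⟨h2.map sub_right_injective, ?_⟩, h4.anti fun x y => by omega⟩
    simp only [List.mem_map, forall_exists_index, and_imp, forall_apply_eq_imp_iff₂,
      List.length_map]
    intro x hx
    have := h3 x hx
    omega
  refine Finset.sum_bij' (fun w _ => w.map (fun x => (m : ℤ) + 1 - x))
    (fun w _ => w.map (fun x => (m : ℤ) + 1 - x)) hmem hmem ?_ ?_ ?_ <;>
  · intro w _
    simp

lemma Dser_flipM (M : Bool → Bool → R) (s e : Bool) : Dser M s e = Dser (flipM M) (!s) (!e) := by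
  ext n
  simp only [Dser, PowerSeries.coeff_mk]
  rw [sum_compl (n + 1) fun w => wtl (flipM M) (!s) (dw w) (!e)]
  refine Finset.sum_congr rfl fun w hw => ?_
  rw [dw_anti (fun x y => by omega) (mem_KS.1 hw).2.1.1, wtl_flipM]

lemma Pser_flipM (M : Bool → Bool → R) (s e : Bool) : Pser M s e = Qser (flipM M) (!s) (!e) := by
  classical
  ext n
  simp only [Pser, Qser, PowerSeries.coeff_mk, Finset.sum_filter]
  rw [sum_compl (n + 1) fun w => if ¬ CoDec w then wtl M s (dw w) e else 0]
  refine Finset.sum_congr rfl fun w hw => ?_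
  rw [dw_anti (fun x y => by omega) (mem_KS.1 hw).2.1.1, codec_anti fun x y => by omega,
    ← wtl_flipM M]
  simp [Function.comp_def]

lemma Dser_eq_P (M : Bool → Bool → R) (s e : Bool) :
    Dser M s e = Pser M s e + PowerSeries.X * (Dser M s true * Pser M true e) := by
  rw [Dser_flipM, Dser_eq_Q, Pser_flipM, Dser_flipM M s true, Pser_flipM M true e]
  rfl

lemma KS_one : KS 1 = {[1]} := by
  ext w
  rw [mem_KS, Finset.mem_singleton]
  constructor
  · rintro ⟨h1, ⟨-, h2⟩, -⟩
    obtain ⟨x, rfl⟩ := List.length_eq_one_iff.1 h1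
    have := h2 x (by simp)
    simp only [List.length_singleton] at this
    have : x = 1 := by omega
    rw [this]
  · rintro rfl
    refine ⟨rfl, ⟨by simp, by simp⟩, fun a b c d h => ?_⟩
    have := h.length_le
    simp at this

lemma Dser_add (M : Bool → Bool → R) (s e : Bool) :
    Dser M s e + PowerSeries.C (M s e) = Pser M s e + Qser M s e := by
  classical
  ext n
  simp only [map_add, Dser, Pser, Qser, PowerSeries.coeff_mk]
  rcases n with _ | n
  · rw [Finset.filter_true_of_mem, Finset.filter_true_of_mem, PowerSeries.coeff_zero_C, zero_add,
      KS_one]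
    · simp [dw, wtl]
    · exact fun w hw => (not_dec_of_length_one (mem_KS.1 hw).1).1
    · exact fun w hw => (not_dec_of_length_one (mem_KS.1 hw).1).2
  · rw [PowerSeries.coeff_succ_C, add_zero,
      ← Finset.sum_filter_add_sum_filter_not (KS (n + 1 + 1)) Dec]
    congr 1
    refine Finset.sum_congr (Finset.filter_congr fun w hw => ?_) fun _ _ => rfl
    obtain ⟨h1, h2, h3⟩ := mem_KS.1 hw
    refine ⟨not_dec_and_codec, fun h => ?_⟩
    exact (dec_or_codec h3 h2.1 (by omega)).resolve_right h

/-- The series `Dser M true false` depends only on `M true true + M false false` and on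
`M false true`: it solves a cubic equation whose coefficients involve only these. -/
lemma Dser_cubic (M : Bool → Bool → R) (hM : M true false = 1) :
    Dser M true false = 1 + PowerSeries.X * PowerSeries.C (M true true + M false false) *
        Dser M true false +
      PowerSeries.X ^ 2 * PowerSeries.C (M false true) *
        (Dser M true false ^ 2 + Dser M true false ^ 3) := by
  have inv : ∀ φ : PowerSeries R, ∃ x, (1 + PowerSeries.X * φ) * x = 1 := fun φ =>
    (PowerSeries.isUnit_iff_constantCoeff.2 (by simp)).exists_right_inv
  have hP := Dser_eq_P M
  have hQ := Dser_eq_Q M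
  have hD := Dser_add M
  -- the inverses `x`, `y` of `1 + X D(1,1)`, `1 + X D(0,0)` express `P(1,·)`, `Q(0,·)` through `D`
  obtain ⟨x, hx⟩ := inv (Dser M true true)
  obtain ⟨y, hy⟩ := inv (Dser M false false)
  have eP : ∀ e, Pser M true e = x * Dser M true e := fun e => by
    linear_combination (-x) * hP true e - Pser M true e * hx
  have eQ : ∀ e, Qser M false e = y * Dser M false e := fun e => by
    linear_combination (-y) * hQ false e - Qser M false e * hy
  have eD : ∀ s e, Dser M s e = PowerSeries.C (M s e) +
      PowerSeries.X * (Dser M s true * (x * Dser M true e)) +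
      PowerSeries.X * (Dser M s false * (y * Dser M false e)) := fun s e => by
    rw [← eP, ← eQ]
    linear_combination hP s e + hQ s e - hD s e
  have h1 := eD true false
  have h2 := eD false true
  have h3 := eD true true
  have h4 := eD false false
  rw [hM, map_one] at h1
  rw [map_add]
  set f := Dser M true false
  set g := Dser M false true
  set α := Dser M true true
  set β := Dser M false false
  set z : PowerSeries R := PowerSeries.X
  set a := PowerSeries.C (M true true)
  set b := PowerSeries.C (M false false)
  set p := PowerSeries.C (M false true)
  have f1 : f * (x + y - 1) = 1 := by
    linear_combination h1 + f * hx + f * hy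
  have g1 : g * (x + y - 1) = p := by
    linear_combination h2 + g * hx + g * hy
  have hg : g = p * f := by
    linear_combination (-g) * f1 + f * g1
  have a1 : 1 - x = z * a + z ^ 2 * f * g * y := by
    linear_combination z * h3 + (z * α - 1) * hx
  have b1 : 1 - y = z * b + z ^ 2 * f * g * x := by
    linear_combination z * h4 + (z * β - 1) * hy
  rw [hg] at a1 b1
  linear_combination f1 + f * (a1 + b1) + z ^ 2 * p * f ^ 2 * f1

/-- The difference of two solutions is annihilated by a series with constant coefficient `1`. -/
lemma cubic_unique {c p f f' : PowerSeries R}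
    (h : f = 1 + PowerSeries.X * c * f + PowerSeries.X ^ 2 * p * (f ^ 2 + f ^ 3))
    (h' : f' = 1 + PowerSeries.X * c * f' + PowerSeries.X ^ 2 * p * (f' ^ 2 + f' ^ 3)) :
    f = f' := by
  obtain ⟨x, hx⟩ := (PowerSeries.isUnit_iff_constantCoeff.2 (by simp) :
    IsUnit (1 - PowerSeries.X * (c + PowerSeries.X * p *
      (f + f' + f ^ 2 + f * f' + f' ^ 2)))).exists_right_inv
  linear_combination (-(f - f')) * hx + x * h - x * h'

end Weights

/-! ### The gamma expansion and descent statistics -/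

section Statistics

variable {R : Type*} [CommRing R]

/-- The transition weights: `a` for a double descent, `b` for a double ascent, `p` for a peak and
`1` for a valley. -/
def Mst (a b p : R) : Bool → Bool → R
  | true, true => a
  | false, false => b
  | false, true => p
  | true, false => 1

/-- The number of consecutive pairs `true true` in the word `s · l`; with `l = dw w` and
`s = true`, the number of double descents of `w` for the convention `w_0 = ∞`. -/
def ddc : Bool → List Bool → ℕ
  | _, [] => 0
  | s, x :: l => (if s = true ∧ x = true then 1 else 0) + ddc x l

/-- With weights `(t, 1, t)` each descent contributes `t`. -/
lemma wtl_des (t : R) : ∀ (s : Bool) (l : List Bool),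
    wtl (Mst t 1 t) s l false = t ^ l.count true
  | true, [] => by simp [wtl, Mst]
  | false, [] => by simp [wtl, Mst]
  | true, true :: l => by simp [wtl, Mst, wtl_des t true l, pow_succ']
  | true, false :: l => by simp [wtl, Mst, wtl_des t false l]
  | false, true :: l => by simp [wtl, Mst, wtl_des t true l, pow_succ']
  | false, false :: l => by simp [wtl, Mst, wtl_des t false l]

lemma wtl_gamma_zero (b p : R) : ∀ (s : Bool) (l : List Bool), ddc s l ≠ 0 →
    wtl (Mst 0 b p) s l false = 0
  | _, [], h => absurd rfl h
  | true, true :: l, _ => by simp [wtl, Mst]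
  | true, false :: l, h => by
    simp [wtl, wtl_gamma_zero b p false l (by simpa [ddc] using h)]
  | false, true :: l, h => by
    simp [wtl, wtl_gamma_zero b p true l (by simpa [ddc] using h)]
  | false, false :: l, h => by
    simp [wtl, wtl_gamma_zero b p false l (by simpa [ddc] using h)]

/-- Without double descents, peaks correspond to descents (when `s = true`, the word starts as
after a descent and each descent is preceded by an ascent), and the remaining factors come from
the `j` double ascents. -/
lemma wtl_gamma (b p : R) : ∀ (s : Bool) (l : List Bool), ddc s l = 0 →
    ∃ j, 2 * l.count true + j = l.length + (if s = true then 0 else 1) ∧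
      wtl (Mst 0 b p) s l false = p ^ l.count true * b ^ j
  | true, [], _ => ⟨0, by simp, by simp [wtl, Mst]⟩
  | false, [], _ => ⟨1, by simp, by simp [wtl, Mst]⟩
  | true, true :: l, h => by simp [ddc] at h
  | true, false :: l, h => by
    obtain ⟨j, h1, h2⟩ := wtl_gamma b p false l (by simpa [ddc] using h)
    refine ⟨j, by simpa using h1, by simp [wtl, Mst, h2]⟩
  | false, true :: l, h => by
    obtain ⟨j, h1, h2⟩ := wtl_gamma b p true l (by simpa [ddc] using h)
    refine ⟨j, ?_, ?_⟩
    · simp at h1 ⊢; omega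
    · simp [wtl, Mst, h2, pow_succ']; ring
  | false, false :: l, h => by
    obtain ⟨j, h1, h2⟩ := wtl_gamma b p false l (by simpa [ddc] using h)
    refine ⟨j + 1, ?_, ?_⟩
    · simp at h1 ⊢; omega
    · simp [wtl, Mst, h2, pow_succ']; ring

/-- The γ-expansion of the descent polynomial of separable permutations. -/
lemma sum_KS_gamma (t : R) (n : ℕ) :
    ∑ w ∈ KS (n + 1), t ^ (dw w).count true =
      ∑ w ∈ (KS (n + 1)).filter (fun w => ddc true (dw w) = 0),
        t ^ (dw w).count true * (1 + t) ^ (n - 2 * (dw w).count true) := by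
  have h1 := Dser_cubic (Mst t 1 t) rfl
  have h2 := Dser_cubic (Mst 0 (1 + t) t) rfl
  have hc : Mst t 1 t true true + Mst t 1 t false false =
      Mst 0 (1 + t) t true true + Mst 0 (1 + t) t false false := by
    simp only [Mst]; ring
  rw [hc] at h1
  have h := congrArg (PowerSeries.coeff n) (cubic_unique h1 h2)
  simp only [Dser, PowerSeries.coeff_mk, wtl_des] at h
  rw [h, Finset.sum_filter]
  refine Finset.sum_congr rfl fun w hw => ?_
  split_ifs with hd
  · obtain ⟨j, hj, he⟩ := wtl_gamma (1 + t) t true (dw w) hd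
    rw [he]
    have hl := length_dw w
    rw [(mem_KS.1 hw).1] at hl
    simp only [if_true] at hj
    congr 2
    omega
  · exact wtl_gamma_zero _ _ _ _ hd

end Statistics

/-- Comparing the positions `i` with `(x :: l)[i]! > l[i]!` with the letters of the descent word. -/
lemma des_aux : ∀ (l : List ℤ) (x : ℤ),
    (∑ i ∈ Finset.range l.length, if (x :: l)[i]! > l[i]! then 1 else 0) =
      (dw (x :: l)).count true
  | [], _ => rfl
  | y :: l, x => by
    have ih := des_aux l y
    rw [List.length_cons, Finset.sum_range_succ']
    simp only [List.getElem!_cons_succ, List.getElem!_cons_zero, dw, List.count_cons] at ih ⊢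
    rw [ih]
    simp

lemma ddes_aux : ∀ (l : List ℤ) (x : ℤ) (s : Bool),
    (∑ i ∈ Finset.range l.length, if ((i = 0 ∧ s = true) ∨
        (i ≠ 0 ∧ (x :: l)[i - 1]! > (x :: l)[i]!)) ∧ (x :: l)[i]! > l[i]! then 1 else 0) =
      ddc s (dw (x :: l))
  | [], _, _ => rfl
  | y :: l, x, s => by
    have ih := ddes_aux l y (decide (y < x))
    rw [List.length_cons, Finset.sum_range_succ']
    simp only [List.getElem!_cons_succ, List.getElem!_cons_zero, dw, ddc] at ih ⊢
    rw [← ih, add_comm]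
    congr 1
    · simp
    · refine Finset.sum_congr rfl fun i _ => ?_
      rcases i with _ | i <;> simp

lemma card_DesA (x : ℤ) (l : List ℤ) : (DesA (x :: l)).card = (dw (x :: l)).count true := by
  rw [← des_aux, DesA, Finset.card_filter, List.length_cons, Finset.sum_range_succ']
  simp

lemma card_DDesA (x : ℤ) (l : List ℤ) : (DDesA (x :: l)).card = ddc true (dw (x :: l)) := by
  rw [← ddes_aux, DDesA, Finset.card_filter, List.length_cons, Finset.sum_range_succ']
  refine (congrArg₂ (· + ·) (Finset.sum_congr rfl fun i _ => ?_) (by simp)).trans (add_zero _)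
  rcases i with _ | i <;> simp

lemma card_DesB (l : List ℤ) : (DesB l).card = (dw (0 :: l)).count true := by
  rw [← des_aux, DesB, Finset.card_filter]
  refine Finset.sum_congr rfl fun i _ => ?_
  rcases i with _ | i <;> simp

lemma card_DDesB (l : List ℤ) : (DDesB l).card = ddc true (dw (0 :: l)) := by
  rw [← ddes_aux, DDesB, Finset.card_filter]
  refine Finset.sum_congr rfl fun i _ => ?_
  rcases i with _ | _ | i <;> simp

/-! ### Standardization and type A patterns -/

/-- Strict monotonicity of counting: `x` satisfies `q` and not `p`. -/
lemma length_filter_lt {α : Type*} {l : List α} {p q : α → Bool} {x : α} (hx : x ∈ l)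
    (hpq : ∀ y ∈ l, p y = true → q y = true) (hq : q x = true) (hp : ¬ p x = true) :
    (l.filter p).length < (l.filter q).length := by
  have h1 : l.filter p = (l.filter q).filter p := by
    rw [List.filter_filter]
    refine List.filter_congr fun y hy => ?_
    have := hpq y hy
    cases h : p y <;> simp_all
  rw [h1, List.length_filter_lt_length_iff_exists]
  exact ⟨x, by simp [hx, hq], hp⟩

/-- One plus the number of letters of `a` smaller than `x`: the value that replaces `x` under
standardization. -/
def rk (a : List ℤ) (x : ℤ) : ℤ := ((a.filter (fun y => decide (y < x))).length : ℤ) + 1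

lemma st_eq (a : List ℤ) : st a = a.map (rk a) := rfl

lemma rk_mono {a : List ℤ} : ∀ x ∈ a, ∀ y ∈ a, x < y → rk a x < rk a y := by
  intro x hx y _ hxy
  have := length_filter_lt (p := fun z => decide (z < x)) (q := fun z => decide (z < y)) hx
    (fun z _ hz => by simp at hz ⊢; omega) (by simpa) (by simp)
  unfold rk
  omega

lemma st_map {l : List ℤ} {r : ℤ → ℤ} (hr : ∀ x ∈ l, ∀ y ∈ l, x < y → r x < r y) :
    st (l.map r) = st l := by
  rw [st_eq, st_eq, List.map_map]
  refine List.map_congr_left fun x hx => ?_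
  simp only [rk, Function.comp_apply, List.filter_map, List.length_map]
  congr 3
  refine List.filter_congr fun y hy => ?_
  simp [lt_iff_of_mono hr hy hx]

/-- In a permutation of `1, …, m` every letter equals its rank. -/
lemma IsP.rk {u : List ℤ} (h : IsP u) {x : ℤ} (hx : x ∈ u) : rk u x = x := by
  have h1 := nodup_length_le (h.1.filter (fun y => decide (y < x))) (a := 0) (b := x - 1)
    fun y hy => by
      simp only [List.mem_filter, decide_eq_true_eq] at hy
      have := h.2 y hy.1
      omega
  have h2 := nodup_length_le (h.1.filter (fun y => !decide (y < x))) (a := x - 1) (b := u.length)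
    fun y hy => by
      simp only [List.mem_filter, Bool.not_eq_true', decide_eq_false_iff_not] at hy
      have := h.2 y hy.1
      omega
  have h3 := List.length_eq_length_filter_add (l := u) (fun y => decide (y < x))
  have h4 := h.2 x hx
  unfold SepPaperFormal.rk
  omega

lemma IsP.st {u : List ℤ} (h : IsP u) : st u = u := by
  rw [st_eq]
  conv_rhs => rw [← List.map_id u]
  exact List.map_congr_left fun x hx => h.rk hx

lemma isP_st {a : List ℤ} (h : a.Nodup) : IsP (st a) := by
  rw [st_eq]
  refine ⟨h.map_on fun x hx y hy hxy => ?_, ?_⟩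
  · rcases lt_trichotomy x y with h1 | h1 | h1
    · have := rk_mono x hx y hy h1; omega
    · exact h1
    · have := rk_mono y hy x hx h1; omega
  · simp only [List.mem_map, forall_exists_index, and_imp, forall_apply_eq_imp_iff₂,
      List.length_map]
    intro x hx
    have : (a.filter (fun y => decide (y < x))).length < a.length :=
      List.length_filter_lt_length_iff_exists.2 ⟨x, hx, by simp⟩
    unfold rk
    omega

lemma signedPerm_iff {w : List ℤ} : IsSignedPerm w ↔
    (w.map Int.natAbs).Nodup ∧ ∀ x ∈ w, 1 ≤ x.natAbs ∧ x.natAbs ≤ w.length := by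
  unfold IsSignedPerm
  constructor
  · intro h
    refine ⟨h.nodup_iff.2 List.nodup_range', fun x hx => ?_⟩
    have := h.mem_iff.1 (List.mem_map_of_mem hx)
    rw [List.mem_range'_1] at this
    omega
  · rintro ⟨h1, h2⟩
    refine (List.Nodup.subperm h1 fun x hx => ?_).perm_of_length_le (by simp)
    obtain ⟨y, hy, rfl⟩ := List.mem_map.1 hx
    rw [List.mem_range'_1]
    have := h2 y hy
    omega

lemma map_eq_four {s : List ℤ} {r : ℤ → ℤ} {p q t u : ℤ} (h : s.map r = [p, q, t, u]) :
    ∃ a b c d, s = [a, b, c, d] ∧ r a = p ∧ r b = q ∧ r c = t ∧ r d = u := by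
  match s, h with
  | [a, b, c, d], h =>
    simp only [List.map_cons, List.map_nil, List.cons.injEq, and_true] at h
    exact ⟨a, b, c, d, rfl, h⟩

lemma st_3142 {a b c d : ℤ} : st [a, b, c, d] = [3, 1, 4, 2] ↔ b < d ∧ d < a ∧ a < c := by
  constructor
  · intro he
    have hm {x y : ℤ} := lt_iff_of_mono (rk_mono (a := [a, b, c, d])) (x := x) (y := y)
    rw [st_eq] at he
    simp only [List.map_cons, List.map_nil, List.cons.injEq, and_true] at he
    rw [← hm (by simp) (by simp), ← hm (x := d) (by simp) (by simp),
      ← hm (x := a) (by simp) (by simp)]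
    omega
  · rintro ⟨h1, h2, h3⟩
    have h4 := h1.trans h2
    have h5 := h2.trans h3
    have h6 := h4.trans h3
    simp [st, List.filter_cons, h1, h2, h3, h4, h5, h6, h1.not_gt, h2.not_gt, h3.not_gt,
      h4.not_gt, h5.not_gt, h6.not_gt]

lemma st_2413 {a b c d : ℤ} : st [a, b, c, d] = [2, 4, 1, 3] ↔ c < a ∧ a < d ∧ d < b := by
  constructor
  · intro he
    have hm {x y : ℤ} := lt_iff_of_mono (rk_mono (a := [a, b, c, d])) (x := x) (y := y)
    rw [st_eq] at he
    simp only [List.map_cons, List.map_nil, List.cons.injEq, and_true] at he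
    rw [← hm (by simp) (by simp), ← hm (x := a) (by simp) (by simp),
      ← hm (x := d) (by simp) (by simp)]
    omega
  · rintro ⟨h1, h2, h3⟩
    have h4 := h1.trans h2
    have h5 := h2.trans h3
    have h6 := h4.trans h3
    simp [st, List.filter_cons, h1, h2, h3, h4, h5, h6, h1.not_gt, h2.not_gt, h3.not_gt,
      h4.not_gt, h5.not_gt, h6.not_gt]

lemma containsA_four {w : List ℤ} {p q t u : ℤ} : ContainsA w [p, q, t, u] ↔
    ∃ a b c d, [a, b, c, d].Sublist w ∧ st [a, b, c, d] = [p, q, t, u] := by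
  constructor
  · rintro ⟨s, hs, he⟩
    obtain ⟨a, b, c, d, rfl, -⟩ := map_eq_four (st_eq s ▸ he)
    exact ⟨a, b, c, d, hs, he⟩
  · exact fun ⟨a, b, c, d, hs, he⟩ => ⟨_, hs, he⟩

lemma isSepA_iff {w : List ℤ} : IsSepA w ↔ IsP w ∧ Av w := by
  have hP : IsSignedPerm w ∧ (∀ x ∈ w, 0 < x) ↔ IsP w := by
    rw [signedPerm_iff]
    constructor
    · rintro ⟨⟨h1, h2⟩, h3⟩
      refine ⟨h1.of_map, fun x hx => ?_⟩
      have := h2 x hx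
      have := h3 x hx
      omega
    · rintro ⟨h1, h2⟩
      refine ⟨⟨h1.map_on fun x hx y hy h => ?_, fun x hx => ?_⟩, fun x hx => ?_⟩
      · have := h2 x hx
        have := h2 y hy
        omega
      · have := h2 x hx
        omega
      · have := h2 x hx
        omega
  unfold IsSepA
  rw [← and_assoc, hP, containsA_four, containsA_four, Av]
  simp only [st_3142, st_2413]
  refine and_congr_right fun _ => ⟨fun h a b c d hs =>
    ⟨fun h' => h.1 ⟨a, b, c, d, hs, h'⟩, fun h' => h.2 ⟨a, b, c, d, hs, h'⟩⟩,
    fun h => ⟨fun ⟨a, b, c, d, hs, h'⟩ => (h a b c d hs).1 h',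
      fun ⟨a, b, c, d, hs, h'⟩ => (h a b c d hs).2 h'⟩⟩

/-! ### Signed patterns -/

/-- One plus the number of letters of `a` of absolute value smaller than `|x|`. -/
def rkAbs (a : List ℤ) (x : ℤ) : ℤ := ((a.filter (fun y => decide (|y| < |x|))).length : ℤ) + 1

lemma sts_eq (a : List ℤ) : sts a = a.map (fun x => x.sign * rkAbs a x) := rfl

lemma rkAbs_mono {a : List ℤ} {x y : ℤ} (hx : x ∈ a) (h : |x| < |y|) :
    rkAbs a x < rkAbs a y := by
  have := length_filter_lt (p := fun z => decide (|z| < |x|)) (q := fun z => decide (|z| < |y|)) hx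
    (fun z _ hz => by simp at hz ⊢; omega) (by simpa) (by simp)
  unfold rkAbs
  omega

lemma abs_lt_of_rkAbs {a : List ℤ} {x y : ℤ} (hy : y ∈ a) (h : rkAbs a x < rkAbs a y) :
    |x| < |y| := by
  rcases lt_trichotomy |x| |y| with h1 | h1 | h1
  · exact h1
  · simp [rkAbs, h1] at h
  · have := rkAbs_mono hy h1
    omega

lemma sign_mul_rkAbs_pos {a : List ℤ} {x k : ℤ} (h : x.sign * rkAbs a x = k) (hk : 0 < k) :
    0 < x ∧ rkAbs a x = k := by
  have h0 : 0 < rkAbs a x := by unfold rkAbs; omega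
  rcases lt_trichotomy x 0 with h1 | h1 | h1
  · rw [Int.sign_eq_neg_one_of_neg h1] at h; omega
  · rw [h1] at h; simp at h; omega
  · rw [Int.sign_eq_one_of_pos h1] at h; exact ⟨h1, by omega⟩

lemma sign_mul_rkAbs_neg {a : List ℤ} {x k : ℤ} (h : x.sign * rkAbs a x = k) (hk : k < 0) :
    x < 0 ∧ rkAbs a x = -k := by
  have h0 : 0 < rkAbs a x := by unfold rkAbs; omega
  rcases lt_trichotomy x 0 with h1 | h1 | h1
  · rw [Int.sign_eq_neg_one_of_neg h1] at h; exact ⟨h1, by omega⟩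
  · rw [h1] at h; simp at h; omega
  · rw [Int.sign_eq_one_of_pos h1] at h; omega

lemma map_eq_two {s : List ℤ} {r : ℤ → ℤ} {p q : ℤ} (h : s.map r = [p, q]) :
    ∃ a b, s = [a, b] ∧ r a = p ∧ r b = q := by
  match s, h with
  | [a, b], h =>
    simp only [List.map_cons, List.map_nil, List.cons.injEq, and_true] at h
    exact ⟨a, b, rfl, h⟩

lemma containsB_neg_pos {w : List ℤ} : ContainsB w [-2, 1] ↔
    ∃ a b, [a, b].Sublist w ∧ a < 0 ∧ 0 < b ∧ b < -a := by
  constructor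
  · rintro ⟨s, hs, he⟩
    obtain ⟨a, b, rfl, ha, hb⟩ := map_eq_two (sts_eq s ▸ he)
    have ha := sign_mul_rkAbs_neg ha (by simp)
    have hb := sign_mul_rkAbs_pos hb (by simp)
    have := abs_lt_of_rkAbs (a := [a, b]) (x := b) (y := a) (by simp) (by omega)
    rw [abs_of_neg ha.1, abs_of_pos hb.1] at this
    exact ⟨a, b, hs, ha.1, hb.1, this⟩
  · rintro ⟨a, b, hs, h1, h2, h3⟩
    refine ⟨_, hs, ?_⟩
    simp [sts, List.filter_cons, abs_of_neg h1, abs_of_pos h2, h3, h3.not_gt,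
      Int.sign_eq_one_of_pos h2, Int.sign_eq_neg_one_of_neg h1]

lemma containsB_pos_neg {w : List ℤ} : ContainsB w [2, -1] ↔
    ∃ a b, [a, b].Sublist w ∧ 0 < a ∧ b < 0 ∧ -b < a := by
  constructor
  · rintro ⟨s, hs, he⟩
    obtain ⟨a, b, rfl, ha, hb⟩ := map_eq_two (sts_eq s ▸ he)
    have ha := sign_mul_rkAbs_pos ha (by simp)
    have hb := sign_mul_rkAbs_neg hb (by simp)
    have := abs_lt_of_rkAbs (a := [a, b]) (x := b) (y := a) (by simp) (by omega)
    rw [abs_of_pos ha.1, abs_of_neg hb.1] at this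
    exact ⟨a, b, hs, ha.1, hb.1, this⟩
  · rintro ⟨a, b, hs, h1, h2, h3⟩
    refine ⟨_, hs, ?_⟩
    simp [sts, List.filter_cons, abs_of_neg h2, abs_of_pos h1, h3, h3.not_gt,
      Int.sign_eq_one_of_pos h1, Int.sign_eq_neg_one_of_neg h2]

lemma sts_of_pos {s : List ℤ} (h : ∀ x ∈ s, 0 < x) : sts s = st s := by
  refine List.map_congr_left fun x hx => ?_
  rw [Int.sign_eq_one_of_pos (h x hx), one_mul]
  congr 3
  refine List.filter_congr fun y hy => ?_
  rw [abs_of_pos (h x hx), abs_of_pos (h y hy)]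

lemma sts_neg (s : List ℤ) : sts (s.map (fun x => -x)) = (sts s).map (fun x => -x) := by
  simp only [sts, List.map_map]
  refine List.map_congr_left fun x hx => ?_
  simp [List.filter_map, Function.comp_def]

lemma containsB_pos {w : List ℤ} {p q t u : ℤ} (hp : 0 < p) (hq : 0 < q) (ht : 0 < t)
    (hu : 0 < u) : ContainsB w [p, q, t, u] ↔
    ∃ a b c d, [a, b, c, d].Sublist w ∧ (0 < a ∧ 0 < b ∧ 0 < c ∧ 0 < d) ∧
      st [a, b, c, d] = [p, q, t, u] := by
  constructor
  · rintro ⟨s, hs, he⟩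
    obtain ⟨a, b, c, d, rfl, ha, hb, hc, hd⟩ := map_eq_four (sts_eq s ▸ he)
    have ha := sign_mul_rkAbs_pos ha hp
    have hb := sign_mul_rkAbs_pos hb hq
    have hc := sign_mul_rkAbs_pos hc ht
    have hd := sign_mul_rkAbs_pos hd hu
    refine ⟨a, b, c, d, hs, ⟨ha.1, hb.1, hc.1, hd.1⟩, ?_⟩
    rw [← he, sts_of_pos]
    simp [ha.1, hb.1, hc.1, hd.1]
  · rintro ⟨a, b, c, d, hs, ⟨ha, hb, hc, hd⟩, he⟩
    refine ⟨_, hs, ?_⟩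
    rw [← he, sts_of_pos]
    simp [ha, hb, hc, hd]

lemma containsB_neg {w : List ℤ} {p q t u : ℤ} (hp : 0 < p) (hq : 0 < q) (ht : 0 < t)
    (hu : 0 < u) : ContainsB w [-p, -q, -t, -u] ↔
    ∃ a b c d, [a, b, c, d].Sublist w ∧ (a < 0 ∧ b < 0 ∧ c < 0 ∧ d < 0) ∧
      st [-a, -b, -c, -d] = [p, q, t, u] := by
  constructor
  · rintro ⟨s, hs, he⟩
    obtain ⟨a, b, c, d, rfl, ha, hb, hc, hd⟩ := map_eq_four (sts_eq s ▸ he)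
    have ha := sign_mul_rkAbs_neg ha (by omega)
    have hb := sign_mul_rkAbs_neg hb (by omega)
    have hc := sign_mul_rkAbs_neg hc (by omega)
    have hd := sign_mul_rkAbs_neg hd (by omega)
    refine ⟨a, b, c, d, hs, ⟨ha.1, hb.1, hc.1, hd.1⟩, ?_⟩
    have := congrArg (List.map (fun x => -x)) he
    rw [← sts_neg, sts_of_pos] at this
    · simpa using this
    · simp [ha.1, hb.1, hc.1, hd.1]
  · rintro ⟨a, b, c, d, hs, ⟨ha, hb, hc, hd⟩, he⟩
    refine ⟨_, hs, ?_⟩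
    have h1 : [a, b, c, d] = [-a, -b, -c, -d].map (fun x => -x) := by simp
    rw [h1, sts_neg, sts_of_pos, he]
    · rfl
    · simp [ha, hb, hc, hd]

/-- The six forbidden signed patterns in terms of values: of two letters of opposite sign the
later one is not smaller in absolute value, and no four letters of one sign have the relative
order of `3142` or `2413`. (Negating values exchanges these two patterns.) -/
def SB (w : List ℤ) : Prop :=
  (∀ x y, [x, y].Sublist w → ¬(x < 0 ∧ 0 < y ∧ y < -x) ∧ ¬(0 < x ∧ y < 0 ∧ -y < x)) ∧
  ∀ a b c d, [a, b, c, d].Sublist w →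
    ((0 < a ∧ 0 < b ∧ 0 < c ∧ 0 < d) ∨ (a < 0 ∧ b < 0 ∧ c < 0 ∧ d < 0)) →
    ¬(b < d ∧ d < a ∧ a < c) ∧ ¬(c < a ∧ a < d ∧ d < b)

lemma isSepB_iff {w : List ℤ} : IsSepB w ↔ IsSignedPerm w ∧ SB w := by
  unfold IsSepB
  rw [containsB_neg_pos, containsB_pos_neg,
    containsB_pos (by decide) (by decide) (by decide) (by decide),
    containsB_pos (by decide) (by decide) (by decide) (by decide),
    containsB_neg (by decide) (by decide) (by decide) (by decide),
    containsB_neg (by decide) (by decide) (by decide) (by decide)]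
  simp only [st_3142, st_2413]
  refine and_congr_right fun _ => ?_
  constructor
  · rintro ⟨h1, h2, h3, h4, h5, h6⟩
    refine ⟨fun x y hs => ⟨fun h => h1 ⟨x, y, hs, h⟩, fun h => h2 ⟨x, y, hs, h⟩⟩,
      fun a b c d hs hsg => ⟨fun h => ?_, fun h => ?_⟩⟩
    · rcases hsg with hsg | hsg
      · exact h3 ⟨a, b, c, d, hs, hsg, h⟩
      · exact h6 ⟨a, b, c, d, hs, hsg, by omega⟩
    · rcases hsg with hsg | hsg
      · exact h4 ⟨a, b, c, d, hs, hsg, h⟩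
      · exact h5 ⟨a, b, c, d, hs, hsg, by omega⟩
  · rintro ⟨h1, h2⟩
    refine ⟨?_, ?_, ?_, ?_, ?_, ?_⟩
    · exact fun ⟨x, y, hs, h⟩ => (h1 x y hs).1 h
    · exact fun ⟨x, y, hs, h⟩ => (h1 x y hs).2 h
    · exact fun ⟨a, b, c, d, hs, hsg, h⟩ => (h2 a b c d hs (Or.inl hsg)).1 h
    · exact fun ⟨a, b, c, d, hs, hsg, h⟩ => (h2 a b c d hs (Or.inl hsg)).2 h
    · exact fun ⟨a, b, c, d, hs, hsg, h⟩ => (h2 a b c d hs (Or.inr hsg)).2 (by omega)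
    · exact fun ⟨a, b, c, d, hs, hsg, h⟩ => (h2 a b c d hs (Or.inr hsg)).1 (by omega)

/-! ### Rebuilding a signed permutation from its signs and relative order -/

lemma pair_total {l : List ℤ} {x y : ℤ} (hx : x ∈ l) (hy : y ∈ l) (h : x ≠ y) :
    [x, y].Sublist l ∨ [y, x].Sublist l := by
  induction l with
  | nil => simp at hx
  | cons a l ih =>
    rcases List.mem_cons.1 hx with rfl | hx'
    · have hy : y ∈ l := by
        rcases List.mem_cons.1 hy with hy | hy
        · exact absurd hy.symm h
        · exact hy
      exact Or.inl ((List.singleton_sublist.2 hy).cons_cons x)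
    · rcases List.mem_cons.1 hy with rfl | hy'
      · exact Or.inr ((List.singleton_sublist.2 hx').cons_cons y)
      · exact (ih hx' hy').imp (fun h => h.cons a) (fun h => h.cons a)

lemma pair_glue {l : List ℤ} (hnd : l.Nodup) {x y z : ℤ} (h1 : [x, y].Sublist l)
    (h2 : [y, z].Sublist l) : [x, y, z].Sublist l := by
  induction l with
  | nil => simp at h1
  | cons a l ih =>
    have hy : y ∈ l := by
      rcases List.sublist_cons_iff.1 h1 with h1 | ⟨r, hr, h1⟩
      · exact h1.subset (by simp)
      · simp only [List.cons.injEq] at hr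
        obtain ⟨-, rfl⟩ := hr
        exact h1.subset (by simp)
    have hya : y ≠ a := by
      rintro rfl
      simp [hy] at hnd
    have h2' : [y, z].Sublist l := by
      rcases List.sublist_cons_iff.1 h2 with h2 | ⟨r, hr, h2⟩
      · exact h2
      · simp only [List.cons.injEq] at hr
        exact absurd hr.1 hya
    rcases List.sublist_cons_iff.1 h1 with h1 | ⟨r, hr, h1⟩
    · exact (ih hnd.of_cons h1 h2').cons a
    · simp only [List.cons.injEq] at hr
      rw [hr.1]
      exact h2'.cons_cons a

lemma pairs_of_four {l : List ℤ} {a b c d : ℤ} (h : [a, b, c, d].Sublist l) :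
    [a, b].Sublist l ∧ [a, c].Sublist l ∧ [a, d].Sublist l ∧ [b, c].Sublist l ∧
      [b, d].Sublist l ∧ [c, d].Sublist l := by
  refine ⟨.trans ?_ h, .trans ?_ h, .trans ?_ h, .trans ?_ h, .trans ?_ h, .trans ?_ h⟩ <;>
    simp [List.sublist_cons_iff]

/-- Distinctness of the absolute values makes the comparison in `SB` strict. -/
lemma SB.pair {w : List ℤ} (hP : IsSignedPerm w) (h : SB w) {x y : ℤ} (hs : [x, y].Sublist w) :
    (x ≠ 0 ∧ y ≠ 0) ∧ (x < 0 → 0 < y → -x < y) ∧ (0 < x → y < 0 → x < -y) := by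
  have h1 := signedPerm_iff.1 hP
  have hx := h1.2 x (hs.subset (by simp))
  have hy := h1.2 y (hs.subset (by simp))
  have h2 : x.natAbs ≠ y.natAbs := by simpa using (hs.map Int.natAbs).nodup h1.1
  have h3 := h.1 x y hs
  omega

lemma SB.nodup {w : List ℤ} (hP : IsSignedPerm w) : (0 :: w).Nodup := by
  have h1 := signedPerm_iff.1 hP
  refine List.nodup_cons.2 ⟨fun h => ?_, h1.1.of_map⟩
  have := h1.2 0 h
  simp at this

/-- The key property of a separable signed permutation: `0` followed by `w` is separable. -/
lemma SB.av {w : List ℤ} (hP : IsSignedPerm w) (h : SB w) : Av (0 :: w) := by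
  intro a b c d hs
  rcases List.sublist_cons_iff.1 hs with hs | ⟨r, hr, hs⟩
  · obtain ⟨h1, h2, h3, h4, h5, h6⟩ := pairs_of_four hs
    have h1 := h.pair hP h1
    have h2 := h.pair hP h2
    have h3 := h.pair hP h3
    have h4 := h.pair hP h4
    have h5 := h.pair hP h5
    have h6 := h.pair hP h6
    have h7 := h.2 a b c d hs
    constructor <;> intro h8
    · by_cases hsg : (0 < a ∧ 0 < b ∧ 0 < c ∧ 0 < d) ∨ (a < 0 ∧ b < 0 ∧ c < 0 ∧ d < 0)
      · exact (h7 hsg).1 h8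
      · omega
    · by_cases hsg : (0 < a ∧ 0 < b ∧ 0 < c ∧ 0 < d) ∨ (a < 0 ∧ b < 0 ∧ c < 0 ∧ d < 0)
      · exact (h7 hsg).2 h8
      · omega
  · simp only [List.cons.injEq] at hr
    obtain ⟨rfl, rfl⟩ := hr
    have h1 := h.pair hP (.trans (show [b, c].Sublist [b, c, d] by simp [List.sublist_cons_iff]) hs)
    have h2 := h.pair hP (.trans (show [c, d].Sublist [b, c, d] by simp) hs)
    omega

/-- The order in which the letters of `v` receive the absolute values `1, 2, …`: letters of equal
sign are compared by absolute value, letters of opposite sign by position. -/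
def prec (v : List ℤ) (x y : ℤ) : Prop :=
  (0 < x ∧ 0 < y ∧ x < y) ∨ (x < 0 ∧ y < 0 ∧ y < x) ∨
    (((0 < x ∧ y < 0) ∨ (x < 0 ∧ 0 < y)) ∧ [x, y].Sublist v)

lemma prec_irrefl {v : List ℤ} {x : ℤ} : ¬ prec v x x := by
  unfold prec
  omega

lemma prec_total {v : List ℤ} (h0 : 0 ∉ v) {x y : ℤ} (hx : x ∈ v) (hy : y ∈ v) (h : x ≠ y) :
    prec v x y ∨ prec v y x := by
  have hx0 : x ≠ 0 := fun h => h0 (h ▸ hx)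
  have hy0 : y ≠ 0 := fun h => h0 (h ▸ hy)
  have := pair_total hx hy h
  unfold prec
  by_cases h1 : [x, y].Sublist v <;> by_cases h2 : [y, x].Sublist v <;>
    simp only [h1, h2, and_true, and_false, or_false] at this ⊢ <;> omega

/-- Each failure of transitivity would, together with the leading `0`, produce an occurrence of
`2413` or `3142`. -/
lemma prec_trans {v : List ℤ} (hnd : (0 :: v).Nodup) (hav : Av (0 :: v)) {x y z : ℤ}
    (hx : x ∈ v) (hz : z ∈ v) (h1 : prec v x y) (h2 : prec v y z) : prec v x z := by
  have hg {p q r : ℤ} (h : [p, q].Sublist v) (h' : [q, r].Sublist v) :=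
    hav 0 p q r ((pair_glue hnd.of_cons h h').cons_cons 0)
  by_cases hxz : x = z
  · subst hxz
    rcases h1 with h1 | h1 | ⟨h1, h1'⟩ <;> rcases h2 with h2 | h2 | ⟨h2, h2'⟩ <;> try omega
    have := (pair_glue hnd.of_cons h1' h2').nodup hnd.of_cons
    simp at this
  have ht := pair_total hx hz hxz
  unfold prec
  rcases h1 with h1 | h1 | ⟨h1, h1'⟩ <;> rcases h2 with h2 | h2 | ⟨h2, h2'⟩
  · omega
  · omega
  · refine Or.inr (Or.inr ⟨by omega, ht.resolve_right fun h => ?_⟩)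
    have := hg h2' h
    omega
  · omega
  · omega
  · refine Or.inr (Or.inr ⟨by omega, ht.resolve_right fun h => ?_⟩)
    have := hg h2' h
    omega
  · refine Or.inr (Or.inr ⟨by omega, ht.resolve_right fun h => ?_⟩)
    have := hg h h1'
    omega
  · refine Or.inr (Or.inr ⟨by omega, ht.resolve_right fun h => ?_⟩)
    have := hg h h1'
    omega
  · have := hg h1' h2'
    omega

open Classical in
/-- The rank of `x` among the letters of `v`, with respect to `prec v`. -/
def rkP (v : List ℤ) (x : ℤ) : ℤ := ((v.filter (fun y => decide (prec v y x))).length : ℤ) + 1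

/-- The signed rank of `x`; it sends `0` to `0`. -/
def rP (v : List ℤ) (x : ℤ) : ℤ := x.sign * rkP v x

/-- The signed permutation with the signs of `v` and absolute values given by the ranks for
`prec v`. -/
def Phi (v : List ℤ) : List ℤ := v.map (rP v)

lemma rkP_pos (v : List ℤ) (x : ℤ) : 1 ≤ rkP v x := by unfold rkP; omega

lemma rkP_le {v : List ℤ} {x : ℤ} (hx : x ∈ v) : rkP v x ≤ v.length := by
  classical
  have : (v.filter (fun y => decide (prec v y x))).length < v.length :=
    List.length_filter_lt_length_iff_exists.2 ⟨x, hx, by simp [prec_irrefl]⟩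
  unfold rkP
  convert (show ((v.filter (fun y => decide (prec v y x))).length : ℤ) + 1 ≤ v.length by omega)

lemma rkP_lt {v : List ℤ} (hnd : (0 :: v).Nodup) (hav : Av (0 :: v)) {x y : ℤ}
    (hx : x ∈ v) (hy : y ∈ v) (h : prec v x y) : rkP v x < rkP v y := by
  classical
  have := length_filter_lt (p := fun z => decide (prec v z x)) (q := fun z => decide (prec v z y))
    hx (fun z hz hzx => by simp at hzx ⊢; exact prec_trans hnd hav hz hy hzx h) (by simpa)
    (by simp [prec_irrefl])
  unfold rkP
  convert (show ((v.filter (fun z => decide (prec v z x))).length : ℤ) + 1 <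
    ((v.filter (fun z => decide (prec v z y))).length : ℤ) + 1 by omega)

lemma rP_zero (v : List ℤ) : rP v 0 = 0 := by simp [rP]

lemma rP_pos {v : List ℤ} {x : ℤ} (h : 0 < x) : rP v x = rkP v x := by
  rw [rP, Int.sign_eq_one_of_pos h, one_mul]

lemma rP_neg {v : List ℤ} {x : ℤ} (h : x < 0) : rP v x = -rkP v x := by
  rw [rP, Int.sign_eq_neg_one_of_neg h, neg_one_mul]

/-- Signed ranks respect the usual order, so `0 :: Phi v` and `0 :: v` have the same
standardization. -/
lemma rP_mono {v : List ℤ} (hnd : (0 :: v).Nodup) (hav : Av (0 :: v)) :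
    ∀ x ∈ 0 :: v, ∀ y ∈ 0 :: v, x < y → rP v x < rP v y := by
  intro x hx y hy hxy
  have h1 := rkP_pos v x
  have h2 := rkP_pos v y
  rcases lt_trichotomy x 0 with hx0 | hx0 | hx0 <;>
    rcases lt_trichotomy y 0 with hy0 | hy0 | hy0 <;> try omega
  · have hx : x ∈ v := (List.mem_cons.1 hx).resolve_left hx0.ne
    have hy : y ∈ v := (List.mem_cons.1 hy).resolve_left hy0.ne
    have := rkP_lt hnd hav hy hx (Or.inr (Or.inl ⟨hy0, hx0, hxy⟩))
    rw [rP_neg hx0, rP_neg hy0]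
    omega
  · rw [rP_neg hx0, hy0, rP_zero]; omega
  · rw [rP_neg hx0, rP_pos hy0]; omega
  · rw [rP_pos hy0, hx0, rP_zero]; omega
  · have hx : x ∈ v := (List.mem_cons.1 hx).resolve_left hx0.ne'
    have hy : y ∈ v := (List.mem_cons.1 hy).resolve_left hy0.ne'
    have := rkP_lt hnd hav hx hy (Or.inl ⟨hx0, hy0, hxy⟩)
    rw [rP_pos hx0, rP_pos hy0]
    omega

lemma natAbs_rP {v : List ℤ} {x : ℤ} (hx : x ≠ 0) : ((rP v x).natAbs : ℤ) = rkP v x := by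
  have h1 := rkP_pos v x
  rcases lt_or_gt_of_ne hx with h | h
  · rw [rP_neg h]; omega
  · rw [rP_pos h]; omega

lemma isSepB_Phi {v : List ℤ} (hnd : (0 :: v).Nodup) (hav : Av (0 :: v)) : IsSepB (Phi v) := by
  have h0 : 0 ∉ v := (List.nodup_cons.1 hnd).1
  have hne {x : ℤ} (hx : x ∈ v) : x ≠ 0 := fun h => h0 (h ▸ hx)
  have hm := rP_mono hnd hav
  refine isSepB_iff.2 ⟨signedPerm_iff.2 ⟨?_, ?_⟩, ?_, ?_⟩
  · rw [Phi, List.map_map]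
    refine hnd.of_cons.map_on fun x hx y hy hxy => ?_
    by_contra h
    have e1 := natAbs_rP (v := v) (hne hx)
    have e2 := natAbs_rP (v := v) (hne hy)
    simp only [Function.comp_apply] at hxy
    rcases prec_total h0 hx hy h with h | h
    · have := rkP_lt hnd hav hx hy h; omega
    · have := rkP_lt hnd hav hy hx h; omega
  · intro x' hx'
    obtain ⟨x, hx, rfl⟩ := List.mem_map.1 hx'
    have e1 := natAbs_rP (v := v) (hne hx)
    have e2 := rkP_pos v x
    have e3 := rkP_le hx
    rw [Phi, List.length_map]
    omega
  · intro x' y' hs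
    obtain ⟨l, hl, he⟩ := List.sublist_map_iff.1 hs
    obtain ⟨x, y, rfl, rfl, rfl⟩ := map_eq_two he.symm
    have hx : x ∈ v := hl.subset (by simp)
    have hy : y ∈ v := hl.subset (by simp)
    have hsx := rkP_pos v x
    have hsy := rkP_pos v y
    rcases lt_or_gt_of_ne (hne hx) with hx0 | hx0 <;> rcases lt_or_gt_of_ne (hne hy) with hy0 | hy0
    · rw [rP_neg hx0, rP_neg hy0]; omega
    · have := rkP_lt hnd hav hx hy (Or.inr (Or.inr ⟨Or.inr ⟨hx0, hy0⟩, hl⟩))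
      rw [rP_neg hx0, rP_pos hy0]; omega
    · have := rkP_lt hnd hav hx hy (Or.inr (Or.inr ⟨Or.inl ⟨hx0, hy0⟩, hl⟩))
      rw [rP_pos hx0, rP_neg hy0]; omega
    · rw [rP_pos hx0, rP_pos hy0]; omega
  · have : Av (Phi v) := by
      refine (av_map fun x hx y hy => hm x (by simp [hx]) y (by simp [hy])).2 ?_
      exact hav.sublist (List.sublist_cons_self _ _)
    exact fun a b c d hs _ => this a b c d hs

/-- On a separable signed permutation `prec` is the comparison of absolute values. -/
lemma prec_iff {w : List ℤ} (hP : IsSignedPerm w) (h : SB w) {x y : ℤ} (hx : x ∈ w)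
    (hy : y ∈ w) : prec w x y ↔ |x| < |y| := by
  have key : ∀ x y, prec w x y → |x| < |y| := by
    rintro x y (h1 | h1 | ⟨h1, h2⟩)
    · rw [abs_of_pos h1.1, abs_of_pos h1.2.1]; exact h1.2.2
    · rw [abs_of_neg h1.1, abs_of_neg h1.2.1]; omega
    · have := h.pair hP h2
      rcases h1 with h1 | h1
      · rw [abs_of_pos h1.1, abs_of_neg h1.2]; omega
      · rw [abs_of_neg h1.1, abs_of_pos h1.2]; omega
  refine ⟨key x y, fun hlt => ?_⟩
  refine (prec_total (List.nodup_cons.1 (SB.nodup hP)).1 hx hy (by rintro rfl; omega)).resolve_right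
    fun h' => ?_
  have := key _ _ h'
  omega

lemma Phi_eq_self {w : List ℤ} (hP : IsSignedPerm w) (h : SB w) : Phi w = w := by
  classical
  have h1 := signedPerm_iff.1 hP
  have hQ : IsP (w.map (fun x => |x|)) := by
    refine ⟨?_, ?_⟩
    · have := h1.1.map (Nat.cast_injective (R := ℤ))
      simpa [List.map_map, Function.comp_def] using this
    · simp only [List.mem_map, forall_exists_index, and_imp, forall_apply_eq_imp_iff₂,
        List.length_map]
      intro x hx
      have := h1.2 x hx
      rw [Int.abs_eq_natAbs]
      omega
  conv_rhs => rw [← List.map_id w]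
  refine List.map_congr_left fun x hx => ?_
  have h2 : rkP w x = |x| := by
    have h3 := hQ.rk (List.mem_map_of_mem hx)
    refine Eq.trans ?_ h3
    simp only [rkP, rk, List.filter_map, List.length_map, Function.comp_def]
    congr 3
    refine List.filter_congr fun y hy => ?_
    simp [prec_iff hP h hy hx]
  rw [rP, h2, Int.sign_mul_abs]
  rfl

/-- `Phi` only depends on the relative order of the letters of `0 :: w`. -/
lemma Phi_map {w : List ℤ} {r : ℤ → ℤ} (h0 : r 0 = 0)
    (hr : ∀ x ∈ 0 :: w, ∀ y ∈ 0 :: w, x < y → r x < r y) : Phi (w.map r) = Phi w := by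
  classical
  have hpos {x : ℤ} (hx : x ∈ w) : 0 < r x ↔ 0 < x := by
    simpa [h0] using lt_iff_of_mono hr (x := 0) (y := x) (by simp) (by simp [hx])
  have hneg {x : ℤ} (hx : x ∈ w) : r x < 0 ↔ x < 0 := by
    simpa [h0] using lt_iff_of_mono hr (x := x) (y := 0) (by simp [hx]) (by simp)
  have hlt {x y : ℤ} (hx : x ∈ w) (hy : y ∈ w) : r x < r y ↔ x < y :=
    lt_iff_of_mono hr (by simp [hx]) (by simp [hy])
  have hinj {x y : ℤ} (hx : x ∈ w) (hy : y ∈ w) (h : r x = r y) : x = y := by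
    have := hlt hx hy
    have := hlt hy hx
    omega
  have hsub {x y : ℤ} (hx : x ∈ w) (hy : y ∈ w) :
      [r x, r y].Sublist (w.map r) ↔ [x, y].Sublist w := by
    refine ⟨fun h => ?_, fun h => h.map r⟩
    obtain ⟨l, hl, he⟩ := List.sublist_map_iff.1 h
    obtain ⟨x', y', rfl, h1, h2⟩ := map_eq_two he.symm
    rw [hinj hx (hl.subset (by simp)) h1.symm, hinj hy (hl.subset (by simp)) h2.symm]
    exact hl
  rw [Phi, Phi, List.map_map]
  refine List.map_congr_left fun x hx => ?_
  have h1 : rkP (w.map r) (r x) = rkP w x := by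
    simp only [rkP, List.filter_map, List.length_map]
    congr 3
    refine List.filter_congr fun y hy => ?_
    refine decide_eq_decide.2 ?_
    simp only [prec, hpos, hneg, hlt, hsub, hx, hy]
  have h2 : (r x).sign = x.sign := by
    have := hpos hx
    have := hneg hx
    rcases lt_trichotomy x 0 with h | h | h
    · rw [Int.sign_eq_neg_one_of_neg h, Int.sign_eq_neg_one_of_neg ((hneg hx).2 h)]
    · rw [h, h0]
    · rw [Int.sign_eq_one_of_pos h, Int.sign_eq_one_of_pos ((hpos hx).2 h)]
  rw [Function.comp_apply, rP, rP, h1, h2]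

/-! ### The bijection and the counts -/

lemma sub_mono (h : ℤ) (l : List ℤ) : ∀ x ∈ l, ∀ y ∈ l, x < y → x - h < y - h := by
  intros; omega

/-- Standardizing `0 :: w` identifies separable signed permutations of length `n` with separable
permutations of length `n + 1`; the inverse translates the first letter to `0` and applies `Phi`. -/
lemma bijOn_st (n : ℕ) : Set.BijOn (fun w => st (0 :: w)) {w | w.length = n ∧ IsSepB w}
    (KS (n + 1) : Set (List ℤ)) := by
  refine Set.InvOn.bijOn (f' := fun p => Phi (p.tail.map (fun x => x - p.head!))) ⟨?_, ?_⟩ ?_ ?_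
  · rintro w ⟨-, hw⟩
    obtain ⟨hP, hS⟩ := isSepB_iff.1 hw
    have := Phi_map (w := w) (r := fun x => rk (0 :: w) x - rk (0 :: w) 0) (by simp)
      fun x hx y hy hxy => by have := rk_mono x hx y hy hxy; omega
    rw [Phi_eq_self hP hS] at this
    refine Eq.trans ?_ this
    simp [st_eq, Function.comp_def]
  · intro p hp
    obtain ⟨hl, hP, hav⟩ := mem_KS.1 (Finset.mem_coe.1 hp)
    match p, hl with
    | h :: τ, hl =>
      set v := τ.map (fun x => x - h) with hv
      have hv0 : 0 :: v = (h :: τ).map (fun x => x - h) := by simp [hv]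
      have hav' : Av (0 :: v) := by rw [hv0]; exact (av_map (sub_mono h _)).2 hav
      have hnd : (0 :: v).Nodup := by
        rw [hv0]
        exact hP.1.map (sub_left_injective)
      have h1 : 0 :: Phi v = (0 :: v).map (rP v) := by simp [rP_zero, Phi]
      change st (0 :: Phi v) = h :: τ
      rw [h1, st_map (rP_mono hnd hav'), hv0, st_map (sub_mono h _), hP.st]
  · rintro w ⟨hl, hw⟩
    obtain ⟨hP, hS⟩ := isSepB_iff.1 hw
    refine Finset.mem_coe.2 (mem_KS.2 ⟨by simp [st, hl], isP_st (SB.nodup hP), ?_⟩)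
    exact (av_map rk_mono).2 (hS.av hP)
  · intro p hp
    obtain ⟨hl, hP, hav⟩ := mem_KS.1 (Finset.mem_coe.1 hp)
    match p, hl with
    | h :: τ, hl =>
      set v := τ.map (fun x => x - h) with hv
      have hv0 : 0 :: v = (h :: τ).map (fun x => x - h) := by simp [hv]
      have hav' : Av (0 :: v) := by rw [hv0]; exact (av_map (sub_mono h _)).2 hav
      have hnd : (0 :: v).Nodup := by
        rw [hv0]
        exact hP.1.map (sub_left_injective)
      refine ⟨?_, isSepB_Phi hnd hav'⟩
      simp [Phi] at hl ⊢
      exact hl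

lemma dw_st (w : List ℤ) : dw (st (0 :: w)) = dw (0 :: w) := dw_map rk_mono

lemma card_sepA (n k : ℕ) : Nat.card {w : List ℤ | w.length = n + 1 ∧ IsSepA w ∧
      (DDesA w).card = 0 ∧ (DesA w).card = k} =
    ((KS (n + 1)).filter (fun w => ddc true (dw w) = 0 ∧ (dw w).count true = k)).card := by
  rw [← Nat.card_eq_finsetCard]
  congr! 3 with w
  simp only [Set.mem_ofPred_eq, Finset.mem_filter, mem_KS, isSepA_iff, and_assoc]
  refine and_congr_right fun hl => ?_
  match w, hl with
  | x :: l, _ => rw [card_DDesA, card_DesA]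

lemma card_sepB (n k : ℕ) : Nat.card {w : List ℤ | w.length = n ∧ IsSepB w ∧
      (DDesB w).card = 0 ∧ (DesB w).card = k} =
    ((KS (n + 1)).filter (fun w => ddc true (dw w) = 0 ∧ (dw w).count true = k)).card := by
  rw [← Nat.card_eq_finsetCard]
  refine Nat.card_congr (Set.BijOn.equiv (fun w => st (0 :: w))
    (t := ((KS (n + 1)).filter (fun w => ddc true (dw w) = 0 ∧ (dw w).count true = k) :
      Finset (List ℤ))) ⟨?_, ?_, ?_⟩)
  · rintro w ⟨h1, h2, h3, h4⟩
    refine Finset.mem_coe.2 (Finset.mem_filter.2 ⟨Finset.mem_coe.1 ((bijOn_st n).mapsTo ⟨h1, h2⟩), ?_⟩)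
    rw [dw_st, ← card_DDesB, ← card_DesB]
    exact ⟨h3, h4⟩
  · exact fun w hw w' hw' h => (bijOn_st n).injOn ⟨hw.1, hw.2.1⟩ ⟨hw'.1, hw'.2.1⟩ h
  · intro p hp
    obtain ⟨hp, h2⟩ := Finset.mem_filter.1 (Finset.mem_coe.1 hp)
    obtain ⟨w, hw, rfl⟩ := (bijOn_st n).surjOn (Finset.mem_coe.2 hp)
    rw [dw_st, ← card_DDesB, ← card_DesB] at h2
    exact ⟨w, ⟨hw.1, hw.2, h2⟩, rfl⟩

lemma finsum_sepB (n : ℕ) : (∑ᶠ w ∈ {w : List ℤ | w.length = n ∧ IsSepB w},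
    (X : Polynomial ℤ) ^ (DesB w).card) =
    ∑ p ∈ KS (n + 1), (X : Polynomial ℤ) ^ (dw p).count true := by
  refine (finsum_mem_eq_of_bijOn (M := Polynomial ℤ)
    (g := fun p => (X : Polynomial ℤ) ^ (dw p).count true) _
    (bijOn_st n) fun w _ => ?_).trans ?_
  · rw [card_DesB, dw_st]
  · exact finsum_mem_coe_finset _ _

/-- The descent polynomial `B_n(t)` of separable signed
permutations is γ-positive, with γ-coefficients
`γ_{n,k}^B = #{w ∈ K(B_n) : dd_B(w) = 0, des_B(w) = k}`, and `γ_{n,k}^B = γ_{n+1,k}^S`. -/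
theorem descent_poly_B_gamma_positive (n : ℕ) :
    ((∑ᶠ w ∈ {w : List ℤ | w.length = n ∧ IsSepB w},
        (X : Polynomial ℤ) ^ (DesB w).card) =
      ∑ k ∈ Finset.range (n / 2 + 1),
        (Nat.card {w : List ℤ | w.length = n ∧ IsSepB w ∧
            (DDesB w).card = 0 ∧ (DesB w).card = k} : Polynomial ℤ) *
          (X : Polynomial ℤ) ^ k * (1 + X) ^ (n - 2 * k)) ∧
    (∀ k : ℕ,
      Nat.card {w : List ℤ | w.length = n ∧ IsSepB w ∧
          (DDesB w).card = 0 ∧ (DesB w).card = k} =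
        Nat.card {w : List ℤ | w.length = n + 1 ∧ IsSepA w ∧
          (DDesA w).card = 0 ∧ (DesA w).card = k}) := by
  refine ⟨?_, fun k => (card_sepB n k).trans (card_sepA n k).symm⟩
  rw [finsum_sepB, sum_KS_gamma]
  -- a word of length `n + 1` without double descents has at most `n / 2` descents
  have hmaps : ∀ w ∈ (KS (n + 1)).filter (fun w => ddc true (dw w) = 0),
      (dw w).count true ∈ Finset.range (n / 2 + 1) := by
    intro w hw
    obtain ⟨hw, hd⟩ := Finset.mem_filter.1 hw
    obtain ⟨j, hj, -⟩ := wtl_gamma (1 : ℤ) 1 true (dw w) hd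
    have hl := length_dw w
    rw [(mem_KS.1 hw).1] at hl
    simp only [if_true] at hj
    rw [Finset.mem_range]
    omega
  rw [← Finset.sum_fiberwise_of_maps_to hmaps]
  refine Finset.sum_congr rfl fun k _ => ?_
  rw [card_sepB, Finset.filter_filter, mul_assoc, ← nsmul_eq_mul, ← Finset.sum_const]
  refine Finset.sum_congr rfl fun w hw => ?_
  rw [(Finset.mem_filter.1 hw).2.2]

end

end SepPaperFormal
end

section
/- For every w ∈ K(S_{n+1}), one has φ_n(w_0^{S_{n+1}} w) = w_0^{B_n} φ_n(w); that is, applying φ_n to the permutation with one-line notation (n+2−w_1)⋯(n+2−w_{n+1}) yields the signed permutation obtained from φ_n(w) by negating every entry. (Here w_0^{S_{n+1}}w ∈ K(S_{n+1}) since w is separable.) -/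
/-!
Let `c` be the complement `x ↦ m + 1 - x` on a permutation of `{1, …, m}`. Complementing exchanges
global ascents and global descents, so a derivation of `PhiRel w u` is turned, step by step, into a
derivation for `c w` by swapping the two recursive rules at the same index `p`
(`phiRel_complement`). Two facts make the steps match. If `a ++ b` is a permutation with a global
ascent (descent) between `a` and `b`, then the part with the smaller entries is itself a permutation
and the other part is a shifted permutation (`IsPermWord.split_lt`, `IsPermWord.split_gt`); and
standardization undoes shifts of a permutation (`st_shift`), hence commutes with complementing
(`st_complement`). The last block contributed to the image thus changes from `v` to `-v`, and `⊕`
commutes with negation (`oplus_neg`). Only the fact that `w` is a permutation is used, because the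
relation `PhiRel` already carries the decomposition that separability provides.
-/


namespace SepPaperFormal

noncomputable section

open Polynomial

/-! ### Permutations and their global ascents and descents -/

/-- `w` is the one-line notation of a permutation of `{1, …, w.length}`, phrased as an injective
word with entries in that range. -/
def IsPermWord (w : List ℤ) : Prop :=
  w.Nodup ∧ ∀ x ∈ w, 1 ≤ x ∧ x ≤ (w.length : ℤ)

theorem IsPermWord.toFinset_eq {w : List ℤ} (h : IsPermWord w) :
    w.toFinset = Finset.Icc 1 (w.length : ℤ) := by
  apply Finset.eq_of_subset_of_card_le
  · intro x hx
    simpa using h.2 x (by simpa using hx)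
  · rw [List.toFinset_card_of_nodup h.1]
    simp

theorem IsPermWord.mem {w : List ℤ} (h : IsPermWord w) {x : ℤ} (h1 : 1 ≤ x)
    (h2 : x ≤ (w.length : ℤ)) : x ∈ w := by
  have : x ∈ w.toFinset := by
    rw [h.toFinset_eq]
    simp [h1, h2]
  simpa using this

theorem IsPermWord.perm {v w : List ℤ} (h : IsPermWord v) (p : v.Perm w) : IsPermWord w := by
  refine ⟨p.nodup_iff.1 h.1, fun x hx => ?_⟩
  rw [← p.length_eq]
  exact h.2 x (p.mem_iff.2 hx)

theorem IsPermWord.complement {w : List ℤ} (h : IsPermWord w) :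
    IsPermWord (w.map (fun x => (w.length : ℤ) + 1 - x)) := by
  refine ⟨h.1.map (fun x y hxy => by simpa using hxy), fun x hx => ?_⟩
  obtain ⟨y, hy, rfl⟩ := List.mem_map.1 hx
  have := h.2 y hy
  simp only [List.length_map]
  omega

theorem length_le_of_subset {s : Finset ℤ} {a : List ℤ} (h : ∀ x ∈ s, x ∈ a) :
    s.card ≤ a.length :=
  (Finset.card_le_card (fun x hx => by simpa using h x hx)).trans (List.toFinset_card_le a)

/-- At a global ascent, a permutation is the direct sum of two permutations. -/
theorem IsPermWord.split_lt {a b : List ℤ} (h : IsPermWord (a ++ b))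
    (hab : ∀ x ∈ a, ∀ y ∈ b, x < y) :
    IsPermWord a ∧ ∃ b', IsPermWord b' ∧ b = b'.map (fun x => x + (a.length : ℤ)) := by
  have hl : ((a ++ b).length : ℤ) = a.length + b.length := by simp
  have hnd := List.nodup_append.1 h.1
  refine ⟨⟨hnd.1, fun x hx => ?_⟩, b.map (fun x => x - (a.length : ℤ)), ⟨?_, ?_⟩, ?_⟩
  · have hx' := h.2 x (List.mem_append_left _ hx)
    refine ⟨hx'.1, ?_⟩
    -- everything up to `x` lies in `a`, so `a` has at least `x` entries
    have hc : (Finset.Icc 1 x).card ≤ a.length := length_le_of_subset fun z hz => by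
      rw [Finset.mem_Icc] at hz
      rcases List.mem_append.1 (h.mem hz.1 (hz.2.trans hx'.2)) with hz' | hz'
      · exact hz'
      · have := hab x hx z hz'
        omega
    rw [Int.card_Icc] at hc
    omega
  · exact hnd.2.1.map (fun x y hxy => by simpa using hxy)
  · intro x hx
    obtain ⟨y, hy, rfl⟩ := List.mem_map.1 hx
    have hy' := h.2 y (List.mem_append_right _ hy)
    -- everything from `y` upwards lies in `b`, which bounds `y` from below
    have hc : (Finset.Icc y ((a ++ b).length : ℤ)).card ≤ b.length :=
      length_le_of_subset fun z hz => by
        rw [Finset.mem_Icc] at hz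
        rcases List.mem_append.1 (h.mem (hy'.1.trans hz.1) hz.2) with hz' | hz'
        · have := hab z hz' y hy
          omega
        · exact hz'
    rw [Int.card_Icc] at hc
    rw [List.length_map]
    omega
  · simp [Function.comp_def]

/-- At a global descent, a permutation is the skew sum of two permutations. -/
theorem IsPermWord.split_gt {a b : List ℤ} (h : IsPermWord (a ++ b))
    (hab : ∀ x ∈ a, ∀ y ∈ b, y < x) :
    IsPermWord b ∧ ∃ a', IsPermWord a' ∧ a = a'.map (fun x => x + (b.length : ℤ)) :=
  (h.perm List.perm_append_comm).split_lt (fun x hx y hy => hab y hy x hx)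

/-! ### Standardization, direct sums and complements -/

/-- In a permutation exactly `x - 1` entries lie below the entry `x`, and shifting does not change
this count. -/
theorem st_shift {v : List ℤ} (h : IsPermWord v) (c : ℤ) :
    st (v.map (fun x => x + c)) = v := by
  unfold st
  rw [List.map_map]
  refine (List.map_congr_left fun x hx => ?_).trans (List.map_id v)
  have hx' := h.2 x hx
  have key : ((v.filter (fun y => decide (y < x))).length : ℤ) = x - 1 := by
    have hf : (v.filter (fun y => decide (y < x))).toFinset = Finset.Icc 1 (x - 1) := by
      ext z
      simp only [List.mem_toFinset, List.mem_filter, decide_eq_true_eq, Finset.mem_Icc]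
      constructor
      · rintro ⟨hz, hzx⟩
        have := h.2 z hz
        omega
      · rintro ⟨h1, h2⟩
        exact ⟨h.mem h1 (by omega), by omega⟩
    rw [← List.toFinset_card_of_nodup (h.1.filter _), hf, Int.card_Icc]
    omega
  simp only [Function.comp_def, List.filter_map, List.length_map, add_lt_add_iff_right, id]
  omega

/-- Standardizing any reflection of a permutation gives its complement. -/
theorem st_complement {v : List ℤ} (h : IsPermWord v) (c : ℤ) :
    st (v.map (fun x => c - x)) = v.map (fun x => (v.length : ℤ) + 1 - x) := by
  have := st_shift h.complement (c - v.length - 1)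
  rw [List.map_map] at this
  rw [← this]
  congr 1
  refine List.map_congr_left fun x _ => ?_
  simp only [Function.comp_def]
  ring

theorem oplus_neg (u v : List ℤ) :
    (oplus u v).map (fun x => -x) = oplus (u.map (fun x => -x)) (v.map (fun x => -x)) := by
  simp only [oplus, List.map_append, List.map_map, List.length_map]
  congr 1
  refine List.map_congr_left fun x _ => ?_
  simp only [Function.comp_def, Int.sign_neg]
  ring

/-! ### Complementing a derivation of `PhiRel` -/

/-- Passes from the index form of a global ascent or descent to the entries of the two parts. -/
theorem take_drop_rel {w : List ℤ} {p : ℕ} {R : ℤ → ℤ → Prop}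
    (h : ∀ i j, i < p → p ≤ j → j < w.length → R w[i]! w[j]!) :
    ∀ x ∈ w.take p, ∀ y ∈ w.drop p, R x y := by
  intro x hx y hy
  obtain ⟨i, hi, rfl⟩ := List.mem_iff_getElem.1 hx
  obtain ⟨j, hj, rfl⟩ := List.mem_iff_getElem.1 hy
  rw [List.length_take] at hi
  rw [List.length_drop] at hj
  have := h i (p + j) (by omega) (by omega) (by omega)
  rw [getElem!_pos w i (by omega), getElem!_pos w (p + j) (by omega)] at this
  simpa using this

theorem getElem!_map_of_lt {w : List ℤ} (f : ℤ → ℤ) {i : ℕ} (hi : i < w.length) :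
    (w.map f)[i]! = f w[i]! := by
  rw [getElem!_pos (w.map f) i (by simpa using hi), getElem!_pos w i hi, List.getElem_map]

/-- The claim for every permutation in the domain of `PhiRel`; the induction applies it to the
first part, standardized in the case of a descent, which is again a permutation. -/
theorem phiRel_complement {w u : List ℤ} (hphi : PhiRel w u) (hw : IsPermWord w) :
    PhiRel (w.map (fun x => (w.length : ℤ) + 1 - x)) (u.map (fun x => -x)) := by
  induction hphi with
  | base => simpa using PhiRel.base
  | gasc w u p hp1 hp2 h ih hrec =>
    have hl : (w.take p).length = p := by
      rw [List.length_take]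
      omega
    have hw' : IsPermWord (w.take p ++ w.drop p) := by rwa [List.take_append_drop]
    obtain ⟨ha, b, hb, hdrop⟩ := hw'.split_lt (take_drop_rel h)
    rw [hl] at hdrop
    have key := PhiRel.gdes (w.map (fun x => (w.length : ℤ) + 1 - x)) (u.map (fun x => -x)) p hp1
      (by simpa using hp2)
      (fun i j hi hj hj' => by
        rw [List.length_map] at hj'
        rw [getElem!_map_of_lt _ hj', getElem!_map_of_lt _ (by omega)]
        have := h i j hi hj hj'
        omega)
      (by
        rw [← List.map_take, st_complement ha]
        exact hrec ha)
    rw [oplus_neg]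
    convert key using 2
    rw [← List.map_drop, List.length_map, hdrop, st_shift hb, List.map_map, List.map_map]
    refine List.map_congr_left fun x _ => ?_
    simp only [Function.comp_def]
    omega
  | gdes w u p hp1 hp2 h ih hrec =>
    have hl : (w.drop p).length = w.length - p := List.length_drop
    have hw' : IsPermWord (w.take p ++ w.drop p) := by rwa [List.take_append_drop]
    obtain ⟨hb, a, ha, htake⟩ := hw'.split_gt (take_drop_rel (R := fun x y => y < x) h)
    have hla : a.length = p := by
      have := congrArg List.length htake
      rw [List.length_take, List.length_map] at this
      omega
    rw [htake, st_shift ha] at hrec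
    have key := PhiRel.gasc (w.map (fun x => (w.length : ℤ) + 1 - x)) (u.map (fun x => -x)) p hp1
      (by simpa using hp2)
      (fun i j hi hj hj' => by
        rw [List.length_map] at hj'
        rw [getElem!_map_of_lt _ hj', getElem!_map_of_lt _ (by omega)]
        have := h i j hi hj hj'
        omega)
      (by
        rw [← List.map_take, htake, List.map_map]
        convert hrec ha using 1
        refine List.map_congr_left fun x _ => ?_
        simp only [Function.comp_def]
        omega)
    rw [oplus_neg]
    convert key using 2
    rw [← List.map_drop, st_complement hb, List.map_map]
    refine List.map_congr_left fun x _ => ?_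
    simp only [Function.comp_def]
    omega

theorem IsSepA.isPermWord {w : List ℤ} (h : IsSepA w) : IsPermWord w := by
  obtain ⟨hperm, hpos, -, -⟩ := h
  refine ⟨List.Nodup.of_map _ (hperm.nodup_iff.2 List.nodup_range'), fun x hx => ?_⟩
  have hm := hperm.mem_iff.1 (List.mem_map_of_mem hx)
  rw [List.mem_range'_1] at hm
  have := hpos x hx
  omega

/-- For `w ∈ K(S_{n+1})`, `φ_n(w₀^{S_{n+1}} w) = w₀^{B_n} φ_n(w)`:
applying `φ_n` to `(n+2-w₁)⋯(n+2-w_{n+1})` gives `φ_n(w)` with all entries negated. -/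
theorem phi_w0_eq_neg_phi (n : ℕ) (w u : List ℤ)
    (hw : w.length = n + 1) (hsep : IsSepA w) (hphi : PhiRel w u) :
    PhiRel (w.map (fun x => (n : ℤ) + 2 - x)) (u.map (fun x => -x)) := by
  have key := phiRel_complement hphi hsep.isPermWord
  rw [hw] at key
  convert key using 3
  push_cast
  ring

end

end SepPaperFormal
end
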